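/- Suppose the disturbance system is UBIBS with respect to Ω and uniformly output stable with respect to Ω. Then there exist a smooth function V : ℝⁿ → [0,∞), class-K∞ functions α₁, α₂, and a function α₃ : [0,∞)² → [0,∞) which is of class K in its first argument for each fixed value of its second argument and nonincreasing in its second argument, such that: (1) α₁(|h(ξ)|) ≤ V(ξ) ≤ α₂(|ξ|) for all ξ ∈ ℝⁿ; and (2) ∇V(ξ)·f(ξ,μ) ≤ -α₃(V(ξ), |ξ|) for all ξ ∈ ℝⁿ and all μ ∈ Ω. Moreover, if in addition there is a class-K function σ₀ such that |y(t,ξ,d)| ≤ σ₀(|h(ξ)|) for all t ≥ 0, all ξ and all d ∈ M_Ω, then V can be chosen so that α₁(|h(ξ)|) ≤ V(ξ) ≤ α₂(|h(ξ)|) for all ξ. Finally, if the stronger estimate |y(t,ξ,d)| ≤ β(|h(ξ)|, t) holds for all t ≥ 0, all ξ and all d ∈ M_Ω (with β of class KL), then V can be chosen so that, in addition, the decay estimate is state independent: ∇V(ξ)·f(ξ,μ) ≤ -α₃(V(ξ)) for all ξ ∈ ℝⁿ and all μ ∈ Ω, for some class-K function α₃. -/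

import Mathlib

open MeasureTheory Set Filter Topology
open scoped ENNReal NNReal

noncomputable section

/-- A function of class `K`: continuous, strictly increasing on `[0,∞)` and vanishing at `0`. -/
def IsClassK (α : ℝ → ℝ) : Prop :=
  ContinuousOn α (Ici 0) ∧ StrictMonoOn α (Ici 0) ∧ α 0 = 0

/-- A function of class `K∞`: class `K` and unbounded. -/
def IsClassKInfty (α : ℝ → ℝ) : Prop :=
  IsClassK α ∧ Tendsto α atTop atTop

/-- A function of class `KL`. -/
def IsClassKL (β : ℝ → ℝ → ℝ) : Prop :=
  (∀ t ∈ Ici (0:ℝ), IsClassK fun s => β s t) ∧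
  ∀ s ∈ Ici (0:ℝ), AntitoneOn (fun t => β s t) (Ici 0) ∧
    Tendsto (fun t => β s t) atTop (𝓝 0)

/-- `d` belongs to `M_Ω`: it is a measurable function taking values in `Ω` on `[0,∞)`. -/
def MemMOmega {m : ℕ} (Ω : Set (EuclideanSpace ℝ (Fin m)))
    (d : ℝ → EuclideanSpace ℝ (Fin m)) : Prop :=
  Measurable d ∧ ∀ t ∈ Ici (0:ℝ), d t ∈ Ω

/-- `x` is the solution map of the forward-complete disturbance system `ẋ = f(x,d)`:
for every initial state `ξ` and every `d ∈ M_Ω`, `t ↦ x t ξ d` solves the corresponding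
integral equation on all of `[0,∞)`. -/
def IsSolutionMapOmega {n m : ℕ} (Ω : Set (EuclideanSpace ℝ (Fin m)))
    (f : EuclideanSpace ℝ (Fin n) → EuclideanSpace ℝ (Fin m) → EuclideanSpace ℝ (Fin n))
    (x : ℝ → EuclideanSpace ℝ (Fin n) → (ℝ → EuclideanSpace ℝ (Fin m)) →
      EuclideanSpace ℝ (Fin n)) : Prop :=
  ∀ ξ d, MemMOmega Ω d → ∀ t ∈ Ici (0:ℝ),
    x t ξ d = ξ + ∫ s in (0:ℝ)..t, f (x s ξ d) (d s)

/-- The system is uniformly bounded-input bounded-state (UBIBS) with respect to `Ω`. -/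
def IsUBIBS {n m : ℕ} (Ω : Set (EuclideanSpace ℝ (Fin m)))
    (f : EuclideanSpace ℝ (Fin n) → EuclideanSpace ℝ (Fin m) → EuclideanSpace ℝ (Fin n))
    (x : ℝ → EuclideanSpace ℝ (Fin n) → (ℝ → EuclideanSpace ℝ (Fin m)) →
      EuclideanSpace ℝ (Fin n)) : Prop :=
  IsSolutionMapOmega Ω f x ∧ ∃ (σ : ℝ → ℝ) (c : ℝ), IsClassK σ ∧ 0 ≤ c ∧
    ∀ ξ d, MemMOmega Ω d → ∀ t ∈ Ici (0:ℝ), ‖x t ξ d‖ ≤ max (σ ‖ξ‖) c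

/-- The system is uniformly output stable with respect to `Ω`. -/
def IsUOS {n m p : ℕ} (Ω : Set (EuclideanSpace ℝ (Fin m)))
    (h : EuclideanSpace ℝ (Fin n) → EuclideanSpace ℝ (Fin p))
    (x : ℝ → EuclideanSpace ℝ (Fin n) → (ℝ → EuclideanSpace ℝ (Fin m)) →
      EuclideanSpace ℝ (Fin n)) : Prop :=
  ∃ β : ℝ → ℝ → ℝ, IsClassKL β ∧
    ∀ ξ d, MemMOmega Ω d → ∀ t ∈ Ici (0:ℝ), ‖h (x t ξ d)‖ ≤ β ‖ξ‖ t

/-- A parametrised choice of small positive constants can be made antitone in the parameter. -/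
theorem exists_antitone_choice (P : ℝ → ℝ → Prop)
    (hP : ∀ b b' c c', P b c → b' ≤ b → 0 < c' → c' ≤ c → P b' c')
    (h : ∀ b, ∃ c, 0 < c ∧ P b c) :
    ∃ m : ℝ → ℝ, Antitone m ∧ ∀ b, 0 < m b ∧ m b ≤ 1 ∧ P b (m b) := by
  choose c hc hPc using h
  have hne : ∀ N : ℕ, (Finset.range (N + 1)).Nonempty := fun N => ⟨0, by simp⟩
  let C : ℕ → ℝ := fun N => (Finset.range (N + 1)).inf' (hne N) fun j => min 1 (c j)
  have hCpos : ∀ N, 0 < C N := fun N => by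
    simp only [C, Finset.lt_inf'_iff]
    exact fun j _ => lt_min one_pos (hc j)
  have hCle : ∀ N, C N ≤ min 1 (c N) := fun N =>
    Finset.inf'_le (fun j : ℕ => min 1 (c j)) (by simp)
  have hCanti : Antitone C := fun N M hNM =>
    Finset.inf'_mono _ (by simpa using hNM) _
  refine ⟨fun b => C ⌈b⌉₊, fun a b hab => hCanti (Nat.ceil_mono hab), fun b => ⟨hCpos _, ?_, ?_⟩⟩
  · exact (hCle _).trans (min_le_left _ _)
  · exact hP _ _ _ _ (hPc ⌈b⌉₊) (Nat.le_ceil b) (hCpos _) ((hCle _).trans (min_le_right _ _))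

/-- Below every positive antitone function lies a positive smooth function whose derivative
obeys the same bound. -/
theorem exists_contDiff_pos_le_antitone {m : ℝ → ℝ} (hm : Antitone m) (hpos : ∀ b, 0 < m b) :
    ∃ θ : ℝ → ℝ, ContDiff ℝ (⊤ : ℕ∞) θ ∧
      ∀ b, 0 < θ b ∧ θ b ≤ m b ∧ |deriv θ b| ≤ m b := by
  obtain ⟨e, he⟩ := exists_contMDiffMap_forall_mem_convex_of_local_const (n := (⊤ : ℕ∞))
    (modelWithCornersSelf ℝ ℝ) (t := fun b : ℝ => Ioc 0 (m b)) (fun b => convex_Ioc 0 (m b))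
    (fun b => ⟨m (b + 1), by
      filter_upwards [Iio_mem_nhds (lt_add_one b)] with y hy
      exact ⟨hpos _, hm (le_of_lt hy)⟩⟩)
  have hes : ContDiff ℝ (⊤ : ℕ∞) (e : ℝ → ℝ) := e.contMDiff.contDiff
  have hec : Continuous (e : ℝ → ℝ) := hes.continuous
  let E : ℝ → ℝ := fun b => ∫ u in (0:ℝ)..b, e u
  have hEd : ∀ b, HasDerivAt E (e b) b := fun b =>
    intervalIntegral.integral_hasDerivAt_right (hec.intervalIntegrable _ _)
      (hec.stronglyMeasurableAtFilter _ _) hec.continuousAt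
  have hEs : ContDiff ℝ (⊤ : ℕ∞) E := by
    rw [contDiff_infty_iff_deriv]
    refine ⟨fun b => (hEd b).differentiableAt, ?_⟩
    rwa [show deriv E = e from funext fun b => (hEd b).deriv]
  refine ⟨fun b => E (b + 1) - E b, (hEs.comp (contDiff_id.add contDiff_const)).sub hEs,
    fun b => ?_⟩
  have hInt : E (b + 1) - E b = ∫ u in b..(b + 1), e u :=
    intervalIntegral.integral_interval_sub_left (hec.intervalIntegrable _ _)
      (hec.intervalIntegrable _ _)
  refine ⟨?_, ?_, ?_⟩
  · beta_reduce
    rw [hInt]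
    exact intervalIntegral.intervalIntegral_pos_of_pos (hec.intervalIntegrable _ _)
      (fun u => (he u).1) (lt_add_one b)
  · beta_reduce
    rw [hInt]
    calc ∫ u in b..(b + 1), e u ≤ ∫ _ in b..(b + 1), m b :=
          intervalIntegral.integral_mono_on (by linarith) (hec.intervalIntegrable _ _)
            intervalIntegrable_const (fun u hu => (he u).2.trans (hm hu.1))
      _ = m b := by simp
  · have hd : HasDerivAt (fun b => E (b + 1) - E b) (e (b + 1) - e b) b :=
      ((hEd (b + 1)).comp_add_const b 1).sub (hEd b)
    rw [hd.deriv, abs_le]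
    have h1 := he b
    have h2 := he (b + 1)
    have h3 := hm (show b ≤ b + 1 by linarith)
    exact ⟨by linarith [h1.2, h2.1], by linarith [h1.1, h2.2]⟩

/-- A smooth positive radius function that is small, together with its gradient, in terms of
the norm. -/
theorem exists_contDiff_radius {X : Type*} [NormedAddCommGroup X] [InnerProductSpace ℝ X]
    {m : ℝ → ℝ} (hm : Antitone m) (hpos : ∀ b, 0 < m b) :
    ∃ r : X → ℝ, ContDiff ℝ (⊤ : ℕ∞) r ∧
      ∀ ξ, 0 < r ξ ∧ r ξ ≤ m ‖ξ‖ ∧ ‖fderiv ℝ r ξ‖ ≤ m ‖ξ‖ := by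
  let m' : ℝ → ℝ := fun u => m (1 + u) / (1 + max u 0)
  have hden : ∀ u : ℝ, 0 < 1 + max u 0 := fun u => by positivity
  have hm'pos : ∀ u, 0 < m' u := fun u => div_pos (hpos _) (hden u)
  have hm' : Antitone m' := fun u v huv =>
    div_le_div₀ (hpos _).le (hm (by linarith)) (hden u) (by gcongr)
  obtain ⟨θ, hθ, hθm⟩ := exists_contDiff_pos_le_antitone hm' hm'pos
  have hkey : ∀ ξ : X, m' (‖ξ‖ ^ 2) * (1 + ‖ξ‖ ^ 2) ≤ m ‖ξ‖ := fun ξ => by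
    have h0 : 0 ≤ ‖ξ‖ ^ 2 := by positivity
    simp only [m', max_eq_left h0]
    rw [div_mul_cancel₀ _ (by positivity)]
    exact hm (by nlinarith [sq_nonneg (‖ξ‖ - 1)])
  refine ⟨fun ξ => θ (‖ξ‖ ^ 2), hθ.comp (contDiff_norm_sq ℝ), fun ξ => ⟨(hθm _).1, ?_, ?_⟩⟩
  · refine le_trans ((hθm _).2.1.trans ?_) (hkey ξ)
    nlinarith [hm'pos (‖ξ‖ ^ 2), sq_nonneg ‖ξ‖]
  · have h1 : HasDerivAt θ (deriv θ (‖ξ‖ ^ 2)) (‖ξ‖ ^ 2) :=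
      (hθ.differentiable (by simp)).differentiableAt.hasDerivAt
    have h2 : HasFDerivAt (fun ξ : X => ‖ξ‖ ^ 2) (2 • innerSL ℝ ξ) ξ :=
      (hasStrictFDerivAt_norm_sq ξ).hasFDerivAt
    have h3 := h1.comp_hasFDerivAt ξ h2
    rw [show (fun ξ : X => θ (‖ξ‖ ^ 2)) = θ ∘ fun ξ : X => ‖ξ‖ ^ 2 from rfl, h3.fderiv]
    refine le_trans ?_ (hkey ξ)
    rw [norm_smul, Real.norm_eq_abs]
    refine mul_le_mul (hθm _).2.2 ?_ (norm_nonneg _) (hm'pos _).le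
    calc ‖2 • innerSL ℝ ξ‖ ≤ 2 * ‖innerSL ℝ ξ‖ := by
          simpa using norm_nsmul_le (n := 2) (a := innerSL ℝ ξ)
      _ = 2 * ‖ξ‖ := by rw [innerSL_apply_norm]
      _ ≤ 1 + ‖ξ‖ ^ 2 := by nlinarith [sq_nonneg (‖ξ‖ - 1)]

/-- Every sequence of smooth functions on a finite-dimensional space has positive, geometrically
small weights for which the weighted series is smooth and can be differentiated termwise. -/
theorem exists_weights_contDiff_tsum {X : Type*} [NormedAddCommGroup X] [NormedSpace ℝ X]
    [FiniteDimensional ℝ X] (F : ℕ → X → ℝ) (hF : ∀ k, ContDiff ℝ (⊤ : ℕ∞) (F k)) :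
    ∃ δ : ℕ → ℝ, (∀ k, 0 < δ k ∧ δ k ≤ (1 / 2) ^ k) ∧
      ContDiff ℝ (⊤ : ℕ∞) (fun ξ => ∑' k, δ k * F k ξ) ∧
      ∀ ξ w, HasSum (fun k => δ k * fderiv ℝ (F k) ξ w)
        (fderiv ℝ (fun ξ => ∑' k, δ k * F k ξ) ξ w) := by
  let χ : ℕ → ContDiffBump (0 : X) := fun N => ⟨N + 1, N + 2, by positivity, by linarith⟩
  let H : ℕ → ℕ → X → ℝ := fun N k ξ => χ N ξ * F k ξ
  have hH : ∀ N k, ContDiff ℝ (⊤ : ℕ∞) (H N k) := fun N k => (χ N).contDiff.mul (hF k)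
  have hHc : ∀ N k, HasCompactSupport (H N k) := fun N k => (χ N).hasCompactSupport.mul_right
  have hB : ∀ N k j, ∃ B, ∀ ξ, ‖iteratedFDeriv ℝ j (H N k) ξ‖ ≤ B := fun N k j =>
    ((hHc N k).iteratedFDeriv j).exists_bound_of_continuous
      ((hH N k).continuous_iteratedFDeriv (by exact_mod_cast le_top))
  choose B hB using hB
  have hB0 : ∀ N k j, 0 ≤ B N k j := fun N k j => (norm_nonneg _).trans (hB N k j 0)
  let S : ℕ → ℝ := fun k => ∑ N ∈ Finset.range (k + 1), ∑ j ∈ Finset.range (k + 1), B N k j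
  have hS0 : ∀ k, 0 ≤ S k := fun k =>
    Finset.sum_nonneg fun N _ => Finset.sum_nonneg fun j _ => hB0 N k j
  have hBS : ∀ N k j, N ≤ k → j ≤ k → B N k j ≤ S k := fun N k j hN hj =>
    (Finset.single_le_sum (f := fun j => B N k j) (fun j _ => hB0 N k j)
      (Finset.mem_range.2 (Nat.lt_succ_of_le hj))).trans
    (Finset.single_le_sum (f := fun N => ∑ j ∈ Finset.range (k + 1), B N k j)
      (fun N _ => Finset.sum_nonneg fun j _ => hB0 N k j)
      (Finset.mem_range.2 (Nat.lt_succ_of_le hN)))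
  let δ : ℕ → ℝ := fun k => (1 / 2) ^ k / (1 + S k)
  have hδ : ∀ k, 0 < δ k := fun k => div_pos (by positivity) (by linarith [hS0 k])
  have hsum : ∀ N j, Summable fun k => δ k * B N k j := fun N j => by
    refine Summable.of_norm_bounded_eventually_nat (g := fun k => (1 / 2 : ℝ) ^ k)
      summable_geometric_two ?_
    filter_upwards [eventually_ge_atTop N, eventually_ge_atTop j] with k hN hj
    rw [Real.norm_eq_abs, abs_of_nonneg (mul_nonneg (hδ k).le (hB0 N k j))]
    simp only [δ]
    rw [div_mul_eq_mul_div, div_le_iff₀ (by linarith [hS0 k])]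
    have := hBS N k j hN hj
    gcongr
    linarith
  have hG : ∀ N k, ContDiff ℝ (⊤ : ℕ∞) fun ξ => δ k * H N k ξ := fun N k =>
    contDiff_const.mul (hH N k)
  have hGB : ∀ N k j ξ, ‖iteratedFDeriv ℝ j (fun ξ => δ k * H N k ξ) ξ‖ ≤ δ k * B N k j := by
    intro N k j ξ
    rw [show (fun ξ => δ k * H N k ξ) = δ k • H N k from rfl,
      iteratedFDeriv_const_smul_apply ((hH N k).contDiffAt.of_le (by exact_mod_cast le_top)),
      norm_smul, Real.norm_eq_abs, abs_of_pos (hδ k)]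
    exact mul_le_mul_of_nonneg_left (hB N k j ξ) (hδ k).le
  have hloc : ∀ N : ℕ, ∀ ξ : X, ‖ξ‖ < N + 1 →
      (∀ k, (fun ξ => δ k * F k ξ) =ᶠ[𝓝 ξ] fun ξ => δ k * H N k ξ) ∧
      (fun ξ => ∑' k, δ k * F k ξ) =ᶠ[𝓝 ξ] fun ξ => ∑' k, δ k * H N k ξ := by
    intro N ξ hξ
    have hn : ∀ᶠ η in 𝓝 ξ, χ N η = 1 := by
      filter_upwards [continuous_norm.continuousAt.eventually (Iio_mem_nhds hξ)] with η hη
      refine (χ N).one_of_mem_closedBall ?_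
      rw [mem_closedBall_zero_iff]
      exact le_of_lt hη
    refine ⟨fun k => ?_, ?_⟩ <;> filter_upwards [hn] with η hη <;> simp [H, hη]
  refine ⟨δ, fun k => ⟨hδ k, div_le_self (by positivity) (by linarith [hS0 k])⟩, ?_, ?_⟩
  · rw [contDiff_iff_contDiffAt]
    intro ξ
    obtain ⟨N, hN⟩ := exists_nat_gt ‖ξ‖
    refine ContDiffAt.congr_of_eventuallyEq ?_ (hloc N ξ (by linarith)).2
    exact (contDiff_tsum (hG N) (fun j _ => hsum N j) (fun j k x _ => hGB N k j x)).contDiffAt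
  · intro ξ w
    obtain ⟨N, hN⟩ := exists_nat_gt ‖ξ‖
    have hξ : ‖ξ‖ < N + 1 := by linarith
    have hd : ∀ k x, HasFDerivAt (fun ξ => δ k * H N k ξ)
        (fderiv ℝ (fun ξ => δ k * H N k ξ) x) x := fun k x =>
      ((hG N k).differentiable (by simp)).differentiableAt.hasFDerivAt
    have hb : ∀ k x, ‖fderiv ℝ (fun ξ => δ k * H N k ξ) x‖ ≤ δ k * B N k 1 := fun k x => by
      rw [← norm_iteratedFDeriv_one]
      exact hGB N k 1 x
    have h0 : Summable fun k => δ k * H N k ξ := by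
      refine Summable.of_norm_bounded (hsum N 0) fun k => ?_
      have := hGB N k 0 ξ
      rwa [norm_iteratedFDeriv_zero] at this
    have hmain := hasFDerivAt_tsum (hsum N 1) hd hb h0 ξ
    have hs : Summable fun k => fderiv ℝ (fun ξ => δ k * H N k ξ) ξ :=
      Summable.of_norm_bounded (hsum N 1) fun k => hb k ξ
    rw [(hloc N ξ hξ).2.fderiv_eq, hmain.fderiv]
    have heq : (fun k => δ k * fderiv ℝ (F k) ξ w) =
        fun k => fderiv ℝ (fun ξ => δ k * H N k ξ) ξ w := by
      funext k
      rw [← ((hloc N ξ hξ).1 k).fderiv_eq, fderiv_const_mul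
        ((hF k).differentiable (by simp)).differentiableAt]
      rfl
    rw [heq]
    exact (ContinuousLinearMap.apply ℝ ℝ w).hasSum hs.hasSum

theorem IsClassK.nonneg {α : ℝ → ℝ} (h : IsClassK α) {s : ℝ} (hs : 0 ≤ s) : 0 ≤ α s := by
  rw [← h.2.2]
  exact h.2.1.monotoneOn self_mem_Ici hs hs

theorem IsClassK.mono {α : ℝ → ℝ} (h : IsClassK α) {s t : ℝ} (hs : 0 ≤ s) (hst : s ≤ t) :
    α s ≤ α t :=
  h.2.1.monotoneOn hs (hs.trans hst) hst

theorem IsClassK.comp {α γ : ℝ → ℝ} (hα : IsClassK α) (hγ : IsClassK γ) :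
    IsClassK fun s => α (γ s) := by
  have hmaps : MapsTo γ (Ici 0) (Ici 0) := fun s hs => hγ.nonneg hs
  exact ⟨hα.1.comp hγ.1 hmaps, fun s hs t ht hst => hα.2.1 (hmaps hs) (hmaps ht) (hγ.2.1 hs ht hst),
    by simp [hγ.2.2, hα.2.2]⟩

theorem IsClassK.add {α γ : ℝ → ℝ} (hα : IsClassK α) (hγ : IsClassK γ) :
    IsClassK fun s => α s + γ s :=
  ⟨hα.1.add hγ.1, fun _ hs _ ht hst => add_lt_add (hα.2.1 hs ht hst) (hγ.2.1 hs ht hst),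
    by simp only [hα.2.2, hγ.2.2, add_zero]⟩

theorem IsClassKInfty.comp {α γ : ℝ → ℝ} (hα : IsClassKInfty α) (hγ : IsClassKInfty γ) :
    IsClassKInfty fun s => α (γ s) :=
  ⟨hα.1.comp hγ.1, hα.2.comp hγ.2⟩

/-- Adding the identity and rescaling turns a class `K` function into a class `K∞` function. -/
theorem IsClassK.const_mul_add_id {α : ℝ → ℝ} (hα : IsClassK α) {C : ℝ} (hC : 0 < C) :
    IsClassKInfty fun s => C * (α s + s) := by
  refine ⟨⟨continuousOn_const.mul (hα.1.add continuousOn_id), fun s hs t ht hst => ?_, ?_⟩, ?_⟩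
  · have := hα.2.1 hs ht hst
    exact mul_lt_mul_of_pos_left (by linarith) hC
  · simp [hα.2.2]
  · refine tendsto_atTop_mono' _ ?_ (tendsto_id.const_mul_atTop hC)
    filter_upwards [eventually_ge_atTop 0] with s hs
    have := hα.nonneg hs
    simp only [id]
    gcongr
    linarith

/-- A pointwise decay rate which is uniform where `W` is bounded below and `r` is bounded above
can be expressed by a function of class `K` in `W` and antitone in `r`. -/
theorem exists_classK_decay {ι : Type*} (W r D : ι → ℝ) (hD : ∀ i, D i ≤ 0)
    (h : ∀ a : ℝ, 0 < a → ∃ e : ℝ → ℝ, Antitone e ∧ (∀ b, 0 < e b) ∧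
      ∀ i, a ≤ W i → D i ≤ -e (r i)) :
    ∃ α : ℝ → ℝ → ℝ, (∀ b, IsClassK fun s => α s b) ∧ (∀ s, Antitone (α s)) ∧
      ∀ i, D i ≤ -α (W i) (r i) := by
  have hj : ∀ j : ℕ, (0:ℝ) < 1 / (j + 1) := fun j => by positivity
  choose! e he using h
  let ψ : ℝ → ℝ := fun u => max u 0 / (1 + max u 0)
  have hψ : Continuous ψ := by
    refine Continuous.div (by fun_prop) (by fun_prop) fun u => ?_
    have : 0 ≤ max u 0 := le_max_right _ _
    positivity
  have hψ0 : ∀ u, 0 ≤ ψ u := fun u => by positivity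
  have hψ1 : ∀ u, ψ u ≤ 1 := fun u => div_le_one_of_le₀ (by linarith) (by positivity)
  have hψn : ∀ u, u ≤ 0 → ψ u = 0 := fun u hu => by simp [ψ, max_eq_right hu]
  have hψm : ∀ u v, 0 ≤ u → u < v → ψ u < ψ v := fun u v hu huv => by
    simp only [ψ, max_eq_left hu, max_eq_left (hu.trans huv.le)]
    rw [div_lt_div_iff₀ (by linarith) (by linarith)]
    nlinarith
  have hψmono : Monotone ψ := fun u v huv => by
    rcases le_or_gt u 0 with hu | hu
    · rw [hψn u hu]; exact hψ0 v
    · rcases huv.eq_or_lt with rfl | hlt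
      · exact le_rfl
      · exact (hψm u v hu.le hlt).le
  let g : ℕ → ℝ → ℝ := fun j b => min 1 (e (1 / (j + 1)) b)
  have hg0 : ∀ j b, 0 < g j b := fun j b => lt_min one_pos ((he _ (hj j)).2.1 b)
  have hg1 : ∀ j b, g j b ≤ 1 := fun j b => min_le_left _ _
  let w : ℕ → ℝ := fun j => 1 / 2 / 2 ^ j
  have hw0 : ∀ j, 0 < w j := fun j => by positivity
  have hw : HasSum w 1 := hasSum_geometric_two' 1
  let T : ℕ → ℝ → ℝ → ℝ := fun j s b => w j * (g j b * ψ (s - 1 / (j + 1)))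
  have hT0 : ∀ j s b, 0 ≤ T j s b := fun j s b =>
    mul_nonneg (hw0 j).le (mul_nonneg (hg0 j b).le (hψ0 _))
  have hT1 : ∀ j s b, ‖T j s b‖ ≤ w j := fun j s b => by
    rw [Real.norm_of_nonneg (hT0 j s b)]
    exact mul_le_of_le_one_right (hw0 j).le (mul_le_one₀ (hg1 j b) (hψ0 _) (hψ1 _))
  have hTs : ∀ s b, Summable fun j => T j s b := fun s b =>
    Summable.of_norm_bounded hw.summable fun j => hT1 j s b
  refine ⟨fun s b => ∑' j, T j s b, fun b => ⟨?_, ?_, ?_⟩, fun s b b' hb => ?_, fun i => ?_⟩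
  · refine (continuous_tsum (fun j => ?_) hw.summable fun j s => hT1 j s b).continuousOn
    exact continuous_const.mul (continuous_const.mul (hψ.comp (by fun_prop)))
  · intro s hs t ht hst
    obtain ⟨j, hjt⟩ := exists_nat_one_div_lt (lt_of_le_of_lt hs hst)
    refine Summable.tsum_lt_tsum (i := j) (fun k => ?_) ?_ (hTs s b) (hTs t b)
    · exact mul_le_mul_of_nonneg_left (mul_le_mul_of_nonneg_left (hψmono (by linarith))
        (hg0 k b).le) (hw0 k).le
    · refine mul_lt_mul_of_pos_left (mul_lt_mul_of_pos_left ?_ (hg0 j b)) (hw0 j)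
      rcases le_or_gt (s - 1 / (j + 1)) 0 with hn | hp
      · rw [hψn _ hn, ← hψn 0 le_rfl]
        exact hψm _ _ le_rfl (by linarith)
      · exact hψm _ _ hp.le (by linarith)
  · have : ∀ j, T j 0 b = 0 := fun j => by
      simp only [T]
      rw [hψn _ (by linarith [hj j])]
      simp
    simp [this]
  · refine Summable.tsum_le_tsum (fun j => ?_) (hTs s b') (hTs s b)
    refine mul_le_mul_of_nonneg_left (mul_le_mul_of_nonneg_right ?_ (hψ0 _)) (hw0 j).le
    exact min_le_min le_rfl ((he _ (hj j)).1 hb)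
  · have hle : ∀ j, T j (W i) (r i) ≤ w j * (-D i) := fun j => by
      refine mul_le_mul_of_nonneg_left ?_ (hw0 j).le
      rcases le_or_gt (1 / ((j:ℝ) + 1)) (W i) with hW | hW
      · have h1 := (he _ (hj j)).2.2 i hW
        calc g j (r i) * ψ (W i - 1 / (j + 1)) ≤ g j (r i) :=
              mul_le_of_le_one_right (hg0 _ _).le (hψ1 _)
          _ ≤ e (1 / (j + 1)) (r i) := min_le_right _ _
          _ ≤ -D i := by linarith
      · rw [hψn _ (by linarith), mul_zero]
        linarith [hD i]
    have := hasSum_le hle (hTs _ _).hasSum (hw.mul_right (-D i))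
    linarith

/-- A weighted series of hinge functions with knots tending to `0` is of class `K∞`. -/
theorem isClassKInfty_tsum_hinge {δ : ℕ → ℝ} (hδ : ∀ k, 0 < δ k ∧ δ k ≤ (1 / 2) ^ k) :
    (∀ s : ℝ, Summable fun k : ℕ => δ k * max (s - 2 / (k + 1)) 0) ∧
    IsClassKInfty fun s => ∑' k : ℕ, δ k * max (s - 2 / (k + 1)) 0 := by
  have hk : ∀ k : ℕ, (0:ℝ) < 2 / (k + 1) := fun k => by positivity
  have hδs : Summable δ := Summable.of_norm_bounded (g := fun k => (1 / 2 : ℝ) ^ k)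
    summable_geometric_two fun k => by
      rw [Real.norm_of_nonneg (hδ k).1.le]; exact (hδ k).2
  have hs : ∀ s : ℝ, Summable fun k : ℕ => δ k * max (s - 2 / (k + 1)) 0 := fun s => by
    refine Summable.of_norm_bounded (hδs.mul_right (max s 0)) fun k => ?_
    rw [Real.norm_of_nonneg (mul_nonneg (hδ k).1.le (le_max_right _ _))]
    exact mul_le_mul_of_nonneg_left (max_le_max (by linarith [hk k]) le_rfl) (hδ k).1.le
  refine ⟨hs, ⟨?_, ?_, ?_⟩, ?_⟩
  · refine (LipschitzWith.of_dist_le_mul (K := ⟨∑' k, δ k, tsum_nonneg fun k => (hδ k).1.le⟩)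
      fun s t => ?_).continuous.continuousOn
    rw [dist_eq_norm, ← (hs s).tsum_sub (hs t)]
    refine tsum_of_norm_bounded (hδs.hasSum.mul_right (dist s t)) fun k => ?_
    rw [← mul_sub, norm_mul, Real.norm_of_nonneg (hδ k).1.le, Real.norm_eq_abs]
    refine mul_le_mul_of_nonneg_left ?_ (hδ k).1.le
    refine (abs_max_sub_max_le_abs _ _ _).trans (le_of_eq ?_)
    rw [Real.dist_eq]
    congr 1
    ring
  · intro s h0 t ht hst
    obtain ⟨j, hjt⟩ := exists_nat_one_div_lt (half_pos (lt_of_le_of_lt h0 hst))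
    have hjt' : 2 / ((j:ℝ) + 1) < t := by
      have : 2 / ((j:ℝ) + 1) = 2 * (1 / (j + 1)) := by ring
      linarith
    refine Summable.tsum_lt_tsum (i := j) (fun k => ?_) ?_ (hs s) (hs t)
    · exact mul_le_mul_of_nonneg_left (max_le_max (by linarith) le_rfl) (hδ k).1.le
    · refine mul_lt_mul_of_pos_left ?_ (hδ j).1
      rw [max_eq_left (by linarith : 0 ≤ t - 2 / ((j:ℝ) + 1))]
      exact max_lt (by linarith) (by linarith)
  · have : ∀ k : ℕ, max ((0:ℝ) - 2 / (k + 1)) 0 = 0 := fun k =>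
      max_eq_right (by linarith [hk k])
    simp only [this, mul_zero, tsum_zero]
  · have hle : ∀ s : ℝ, δ 0 * (s - 2) ≤ ∑' k : ℕ, δ k * max (s - 2 / (k + 1)) 0 := fun s => by
      refine le_trans ?_ ((hs s).le_tsum 0 fun k _ => mul_nonneg (hδ k).1.le (le_max_right _ _))
      refine mul_le_mul_of_nonneg_left ?_ (hδ 0).1.le
      refine le_trans (le_of_eq ?_) (le_max_left _ _)
      norm_num
    refine tendsto_atTop_mono hle (Tendsto.const_mul_atTop (hδ 0).1 ?_)
    exact tendsto_atTop_add_const_right _ (-2) tendsto_id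

/-- A locally Lipschitz function vanishing at the origin is bounded by a class `K∞` function
of the norm. -/
theorem LocallyLipschitz.exists_classKInfty_bound {X Y : Type*} [NormedAddCommGroup X]
    [ProperSpace X] [NormedAddCommGroup Y] {h : X → Y} (hh : LocallyLipschitz h) (h0 : h 0 = 0) :
    ∃ α : ℝ → ℝ, IsClassKInfty α ∧ ∀ ξ, ‖h ξ‖ ≤ α ‖ξ‖ := by
  obtain ⟨m, hm, hmP⟩ := exists_antitone_choice
    (fun b c => ∀ ξ : X, ‖ξ‖ ≤ b → c * ‖h ξ‖ ≤ ‖ξ‖)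
    (fun b b' c c' hP hb _ hc ξ hξ =>
      (mul_le_mul_of_nonneg_right hc (norm_nonneg _)).trans (hP ξ (hξ.trans hb)))
    (fun b => by
      rcases lt_or_ge b 0 with hb | hb
      · exact ⟨1, one_pos, fun ξ hξ => absurd (norm_nonneg ξ) (by linarith)⟩
      obtain ⟨K, hK⟩ := hh.locallyLipschitzOn.exists_lipschitzOnWith_of_compact
        (isCompact_closedBall (0:X) b)
      refine ⟨1 / (K + 1), by positivity, fun ξ hξ => ?_⟩
      have h1 := hK.dist_le_mul ξ (by simpa using hξ) 0 (by simpa using hb)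
      rw [h0, dist_zero_right, dist_zero_right] at h1
      rw [one_div, inv_mul_le_iff₀ (by positivity)]
      nlinarith [norm_nonneg ξ])
  have hmono : Monotone fun u => (m u)⁻¹ := fun u v huv =>
    inv_anti₀ (hmP v).1 (hm huv)
  have hone : ∀ u, 1 ≤ (m u)⁻¹ := fun u => (one_le_inv₀ (hmP u).1).2 (hmP u).2.1
  have hInt : ∀ a b, IntervalIntegrable (fun u => (m u)⁻¹) volume a b := fun a b =>
    hmono.intervalIntegrable
  have hlow : ∀ s t, s ≤ t → (t - s) * (m s)⁻¹ ≤ ∫ u in s..t, (m u)⁻¹ := fun s t hst => by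
    have := intervalIntegral.integral_mono_on hst intervalIntegrable_const (hInt s t)
      (fun u hu => hmono hu.1)
    simpa using this
  have hadd : ∀ s t, (∫ u in (0:ℝ)..s, (m u)⁻¹) + ∫ u in s..t, (m u)⁻¹ = ∫ u in (0:ℝ)..t, (m u)⁻¹ :=
    fun s t => intervalIntegral.integral_add_adjacent_intervals (hInt _ _) (hInt _ _)
  have hge : ∀ s t, s ≤ t → t - s ≤ ∫ u in s..t, (m u)⁻¹ := fun s t hst =>
    (le_mul_of_one_le_right (by linarith) (hone s)).trans (hlow s t hst)
  refine ⟨fun s => ∫ u in (0:ℝ)..(2 * s), (m u)⁻¹, ⟨⟨?_, ?_, by simp⟩, ?_⟩, fun ξ => ?_⟩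
  · exact ((intervalIntegral.continuous_primitive hInt 0).comp (by fun_prop)).continuousOn
  · intro s _ t _ hst
    have h1 := hge (2 * s) (2 * t) (by linarith)
    have h2 := hadd (2 * s) (2 * t)
    simp only
    linarith
  · refine tendsto_atTop_mono' _ ?_ tendsto_id
    filter_upwards [eventually_ge_atTop 0] with s hs
    have := hge 0 (2 * s) (by linarith)
    simp only [id]
    linarith
  · have h1 := (hmP ‖ξ‖).2.2 ξ le_rfl
    have h2 := hlow ‖ξ‖ (2 * ‖ξ‖) (by linarith [norm_nonneg ξ])
    have h3 := hge 0 ‖ξ‖ (norm_nonneg ξ)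
    have h4 := hadd ‖ξ‖ (2 * ‖ξ‖)
    have h5 : ‖h ξ‖ ≤ (2 * ‖ξ‖ - ‖ξ‖) * (m ‖ξ‖)⁻¹ := by
      rw [← div_eq_mul_inv, le_div_iff₀ (hmP ‖ξ‖).1]
      linarith
    linarith [norm_nonneg ξ]

theorem fderiv_le_of_eventually_le {X : Type*} [NormedAddCommGroup X] [NormedSpace ℝ X]
    {F : X → ℝ} {ξ w : X} {c : ℝ} (hF : DifferentiableAt ℝ F ξ)
    (h : ∀ᶠ t : ℝ in 𝓝[>] 0, F (ξ + t • w) ≤ F ξ - c * t) : fderiv ℝ F ξ w ≤ -c := by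
  have h1 : HasDerivAt (fun t : ℝ => F (ξ + t • w)) (fderiv ℝ F ξ w) 0 :=
    hF.hasFDerivAt.hasLineDerivAt w
  have h2 := (hasDerivAt_iff_tendsto_slope.1 h1).mono_left
    (nhdsWithin_mono 0 (fun t (ht : 0 < t) => ht.ne') : 𝓝[>] (0:ℝ) ≤ _)
  refine le_of_tendsto h2 ?_
  filter_upwards [h, self_mem_nhdsWithin] with t ht ht0
  have ht0' : 0 < t := ht0
  rw [slope_def_field, sub_zero, div_le_iff₀ ht0', zero_smul, add_zero]
  linarith

theorem exists_uniform_modulus {X U Y : Type*} [NormedAddCommGroup X] [NormedSpace ℝ X]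
    [FiniteDimensional ℝ X] [PseudoMetricSpace U] [NormedAddCommGroup Y] {Ω : Set U} (hΩ : IsCompact Ω) {g : X → U → Y} (hg : Continuous fun p : X × U => g p.1 p.2)
    (R : ℝ) {ε : ℝ} (hε : 0 < ε) :
    ∃ δ, 0 < δ ∧ ∀ ξ : X, ‖ξ‖ ≤ R → ∀ u : X, ‖u‖ ≤ δ → ∀ μ ∈ Ω, ‖g ξ μ - g (ξ + u) μ‖ ≤ ε := by
  have hK : IsCompact (Metric.closedBall (0:X) (R + 1) ×ˢ Ω) :=
    (isCompact_closedBall _ _).prod hΩ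
  have huc := Metric.uniformContinuousOn_iff.1
    (hK.uniformContinuousOn_of_continuous hg.continuousOn) ε hε
  obtain ⟨δ, hδ, h⟩ := huc
  refine ⟨min 1 (δ / 2), by positivity, fun ξ hξ u hu μ hμ => ?_⟩
  have hu1 : ‖u‖ ≤ 1 := hu.trans (min_le_left _ _)
  have hu2 : ‖u‖ ≤ δ / 2 := hu.trans (min_le_right _ _)
  have := h (ξ, μ) ⟨by simpa using by linarith, hμ⟩ (ξ + u, μ)
    ⟨by simpa using (norm_add_le ξ u).trans (by linarith), hμ⟩
    (by rw [Prod.dist_eq]; simpa using by linarith)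
  rw [dist_eq_norm] at this
  exact this.le

section Mollification

variable {X : Type*} [NormedAddCommGroup X] [InnerProductSpace ℝ X] [FiniteDimensional ℝ X]
  [MeasurableSpace X] [BorelSpace X]

/-- A fixed smooth probability density supported in the unit ball. -/
def unitKernel (X : Type*) [NormedAddCommGroup X] [InnerProductSpace ℝ X]
    [FiniteDimensional ℝ X] [MeasurableSpace X] [BorelSpace X] : X → ℝ :=
  (⟨1 / 2, 1, by norm_num, by norm_num⟩ : ContDiffBump (0 : X)).normed volume

theorem contDiff_unitKernel : ContDiff ℝ (⊤ : ℕ∞) (unitKernel X) :=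
  ContDiffBump.contDiff_normed _

theorem unitKernel_nonneg (z : X) : 0 ≤ unitKernel X z :=
  ContDiffBump.nonneg_normed _ z

theorem integral_unitKernel : ∫ z, unitKernel X z = 1 :=
  ContDiffBump.integral_normed _

theorem hasCompactSupport_unitKernel : HasCompactSupport (unitKernel X) :=
  ContDiffBump.hasCompactSupport_normed _

theorem unitKernel_eq_zero {z : X} (hz : 1 < ‖z‖) : unitKernel X z = 0 := by
  by_contra hne
  have hmem : z ∈ Function.support (unitKernel X) := hne
  rw [unitKernel, ContDiffBump.support_normed_eq] at hmem
  rw [mem_ball_zero_iff] at hmem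
  exact absurd hmem (not_lt.2 hz.le)

theorem integral_unitKernel_mono {A B : X → ℝ} (hA : Continuous A) (hB : Continuous B) {c : ℝ}
    (h : ∀ z, ‖z‖ ≤ 1 → A z ≤ B z + c) :
    ∫ z, A z * unitKernel X z ≤ (∫ z, B z * unitKernel X z) + c := by
  have hi : ∀ A : X → ℝ, Continuous A → Integrable fun z => A z * unitKernel X z := fun A hA =>
    (hA.mul contDiff_unitKernel.continuous).integrable_of_hasCompactSupport
      hasCompactSupport_unitKernel.mul_left
  calc ∫ z, A z * unitKernel X z ≤ ∫ z, (B z * unitKernel X z + c * unitKernel X z) := by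
        refine integral_mono (hi A hA) ((hi B hB).add (hi _ continuous_const)) fun z => ?_
        rcases le_or_gt ‖z‖ 1 with hz | hz
        · have := mul_le_mul_of_nonneg_right (h z hz) (unitKernel_nonneg z)
          simp only
          linarith
        · simp [unitKernel_eq_zero hz]
    _ = (∫ z, B z * unitKernel X z) + c := by
        rw [integral_add (hi B hB) (hi _ continuous_const), integral_const_mul,
          integral_unitKernel, mul_one]

/-- Mollification of `G` with variable radius `r`. -/
def mollify (r G : X → ℝ) (ξ : X) : ℝ :=
  ∫ z, G (ξ - r ξ • z) * unitKernel X z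

theorem contDiff_mollify {r G : X → ℝ} (hr : ContDiff ℝ (⊤ : ℕ∞) r) (hr0 : ∀ ξ, 0 < r ξ)
    (hr1 : ∀ ξ, r ξ ≤ 1) (hG : Continuous G) : ContDiff ℝ (⊤ : ℕ∞) (mollify r G) := by
  let g : X → X → ℝ := fun ξ w =>
    ((r ξ) ^ Module.finrank ℝ X)⁻¹ * unitKernel X ((r ξ)⁻¹ • w)
  have hg : ContDiff ℝ (⊤ : ℕ∞) (Function.uncurry g) := by
    have h1 : ContDiff ℝ (⊤ : ℕ∞) fun p : X × X => r p.1 := hr.comp contDiff_fst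
    have h2 : ContDiff ℝ (⊤ : ℕ∞) fun p : X × X => (r p.1)⁻¹ := h1.inv fun p => (hr0 _).ne'
    have h3 : ContDiff ℝ (⊤ : ℕ∞) fun p : X × X => ((r p.1) ^ Module.finrank ℝ X)⁻¹ :=
      (h1.pow _).inv fun p => (pow_pos (hr0 _) _).ne'
    exact h3.mul (contDiff_unitKernel.comp (h2.smul contDiff_snd))
  have hconv := contDiffOn_convolution_right_with_param_comp (𝕜 := ℝ) (n := ⊤)
    (ContinuousLinearMap.mul ℝ ℝ) (s := (univ : Set X)) (v := id) (f := G) (g := g)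
    (k := Metric.closedBall 0 1) (μ := volume) contDiffOn_id isOpen_univ
    (isCompact_closedBall 0 1)
    (fun ξ w _ hw => by
      simp only [g]
      rw [unitKernel_eq_zero, mul_zero]
      rw [mem_closedBall_zero_iff, not_le] at hw
      rw [norm_smul, norm_inv, Real.norm_of_nonneg (hr0 ξ).le, inv_mul_eq_div,
        one_lt_div (hr0 ξ)]
      exact (hr1 ξ).trans_lt hw)
    hG.locallyIntegrable hg.contDiffOn
  rw [contDiffOn_univ] at hconv
  convert hconv using 1
  funext ξ
  rw [convolution_eq_swap]
  have h := Measure.integral_comp_inv_smul_of_nonneg (volume : Measure X)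
    (fun z => G (ξ - r ξ • z) * unitKernel X z) (hr0 ξ).le
  have hpow : (r ξ) ^ Module.finrank ℝ X ≠ 0 := (pow_pos (hr0 ξ) _).ne'
  rw [smul_eq_mul, ← inv_mul_eq_iff_eq_mul₀ hpow, ← integral_const_mul] at h
  rw [mollify, ← h]
  refine integral_congr_ae (Eventually.of_forall fun w => ?_)
  simp only [g, id, ContinuousLinearMap.mul_apply', smul_smul,
    mul_inv_cancel₀ (hr0 ξ).ne', one_smul]
  ring

/-- `V` decays along all directions close to the vector field, at a rate that is uniform
where `V` is bounded below and the gauge `q` is bounded above. -/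
def RobustDecay {U : Type*} (Ω : Set U) (f : X → U → X) (V q : X → ℝ) : Prop :=
  ∀ a : ℝ, 0 < a → ∃ e : ℝ → ℝ, Antitone e ∧ (∀ b, 0 < e b) ∧ ∀ R : ℝ, ∃ ε : ℝ, 0 < ε ∧
    ∀ ξ, ‖ξ‖ ≤ R → a ≤ V ξ → ∀ μ ∈ Ω, ∀ v, ‖v - f ξ μ‖ ≤ ε → ∀ t, 0 ≤ t → t ≤ ε →
      V (ξ + t • v) ≤ V ξ - e (q ξ) * t

/-- Smoothing of `V` above a given level `a`. -/
theorem RobustDecay.exists_smooth_above {U : Type*} [PseudoMetricSpace U] {Ω : Set U}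
    (hΩ : IsCompact Ω) {f : X → U → X} (hf : Continuous fun p : X × U => f p.1 p.2)
    {V q : X → ℝ} (hV : Continuous V) (hV0 : ∀ ξ, 0 ≤ V ξ) (hq : Continuous q)
    (hdec : RobustDecay Ω f V q) {a : ℝ} (ha : 0 < a) :
    ∃ F : X → ℝ, ContDiff ℝ (⊤ : ℕ∞) F ∧
      (∀ ξ, max (V ξ - 2 * a) 0 ≤ F ξ ∧ F ξ ≤ V ξ) ∧
      (∀ ξ, ∀ μ ∈ Ω, fderiv ℝ F ξ (f ξ μ) ≤ 0) ∧
      ∃ e : ℝ → ℝ, Antitone e ∧ (∀ b, 0 < e b) ∧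
        ∀ ξ, 3 * a ≤ V ξ → ∀ μ ∈ Ω, fderiv ℝ F ξ (f ξ μ) ≤ -e (q ξ) := by
  obtain ⟨e, he, hepos, hRD⟩ := hdec (a / 2) (half_pos ha)
  obtain ⟨m, hm, hmP⟩ := exists_antitone_choice
    (fun R c => ∃ ε, 0 < ε ∧
      (∀ ξ, ‖ξ‖ ≤ R + 1 → a / 2 ≤ V ξ → ∀ μ ∈ Ω, ∀ v, ‖v - f ξ μ‖ ≤ ε → ∀ t, 0 ≤ t → t ≤ ε →
        V (ξ + t • v) ≤ V ξ - e (q ξ) * t) ∧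
      ∀ ξ, ‖ξ‖ ≤ R → ∀ u, ‖u‖ ≤ c → |V ξ - V (ξ + u)| ≤ a / 8 ∧ |q ξ - q (ξ + u)| ≤ 1 ∧
        ∀ μ ∈ Ω, ‖f ξ μ - f (ξ + u) μ‖ ≤ ε / 2 ∧ c * ‖f ξ μ‖ ≤ ε / 4)
    (by
      rintro R R' c c' ⟨ε, hε, h1, h2⟩ hR _ hc
      refine ⟨ε, hε, fun ξ hξ => h1 ξ (by linarith), fun ξ hξ u hu => ?_⟩
      obtain ⟨h3, h4, h5⟩ := h2 ξ (hξ.trans hR) u (hu.trans hc)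
      exact ⟨h3, h4, fun μ hμ => ⟨(h5 μ hμ).1,
        (mul_le_mul_of_nonneg_right hc (norm_nonneg _)).trans (h5 μ hμ).2⟩⟩)
    (by
      intro R
      obtain ⟨ε, hε, h1⟩ := hRD (R + 1)
      obtain ⟨δ₁, hδ₁, hm₁⟩ := exists_uniform_modulus (isCompact_univ (X := Unit))
        (g := fun ξ (_ : Unit) => V ξ) (hV.comp continuous_fst) R (show 0 < a / 8 by positivity)
      obtain ⟨δ₂, hδ₂, hm₂⟩ := exists_uniform_modulus (isCompact_univ (X := Unit))
        (g := fun ξ (_ : Unit) => q ξ) (hq.comp continuous_fst) R one_pos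
      obtain ⟨δ₃, hδ₃, hm₃⟩ := exists_uniform_modulus hΩ hf R (half_pos hε)
      obtain ⟨B, hB⟩ := ((isCompact_closedBall (0:X) R).prod hΩ).exists_bound_of_continuousOn
        hf.continuousOn
      have hB' : 0 < 4 * (|B| + 1) := by positivity
      refine ⟨min (min δ₁ δ₂) (min δ₃ (ε / (4 * (|B| + 1)))), by positivity, ε, hε, h1,
        fun ξ hξ u hu => ?_⟩
      simp only [le_min_iff] at hu
      refine ⟨hm₁ ξ hξ u hu.1.1 () trivial, hm₂ ξ hξ u hu.1.2 () trivial,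
        fun μ hμ => ⟨hm₃ ξ hξ u hu.2.1 μ hμ, ?_⟩⟩
      have hfB : ‖f ξ μ‖ ≤ |B| + 1 :=
        (hB (ξ, μ) ⟨by simpa using hξ, hμ⟩).trans (by linarith [le_abs_self B])
      calc min (min δ₁ δ₂) (min δ₃ (ε / (4 * (|B| + 1)))) * ‖f ξ μ‖
          ≤ ε / (4 * (|B| + 1)) * (|B| + 1) :=
            mul_le_mul ((min_le_right _ _).trans (min_le_right _ _)) hfB (norm_nonneg _)
              (by positivity)
        _ = ε / 4 := by field_simp)
  obtain ⟨r, hr, hrm⟩ := exists_contDiff_radius (X := X) hm fun b => (hmP b).1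
  have hu : ∀ ξ z : X, ‖z‖ ≤ 1 → ‖-(r ξ • z)‖ ≤ m ‖ξ‖ := fun ξ z hz => by
    rw [norm_neg, norm_smul, Real.norm_of_nonneg (hrm ξ).1.le]
    exact (mul_le_of_le_one_right (hrm ξ).1.le hz).trans (hrm ξ).2.1
  have hVz : ∀ ξ z : X, ‖z‖ ≤ 1 → |V ξ - V (ξ - r ξ • z)| ≤ a / 8 := fun ξ z hz => by
    obtain ⟨ε, hε, h1, h2⟩ := (hmP ‖ξ‖).2.2
    rw [sub_eq_add_neg ξ]
    exact (h2 ξ le_rfl _ (hu ξ z hz)).1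
  let G : X → ℝ := fun ξ => max (V ξ - a) 0
  have hG : Continuous G := by fun_prop
  have hGξ : ∀ ξ, Continuous fun z : X => G (ξ - r ξ • z) := fun ξ => hG.comp (by fun_prop)
  have hF : ContDiff ℝ (⊤ : ℕ∞) (mollify r G) := contDiff_mollify hr (fun ξ => (hrm ξ).1)
    (fun ξ => (hrm ξ).2.1.trans (hmP _).2.1) hG
  have hstep : ∀ ξ, ∀ μ ∈ Ω, ∀ᶠ t : ℝ in 𝓝[>] 0, ∀ z, ‖z‖ ≤ 1 →
      G (ξ + t • f ξ μ - r (ξ + t • f ξ μ) • z) ≤ G (ξ - r ξ • z) ∧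
      (3 * a ≤ V ξ → G (ξ + t • f ξ μ - r (ξ + t • f ξ μ) • z) ≤
        G (ξ - r ξ • z) - e (q ξ + 1) * t) := by
    intro ξ μ hμ
    obtain ⟨ε, hε, h1, h2⟩ := (hmP ‖ξ‖).2.2
    set w := f ξ μ with hw
    have hline : Tendsto (fun t : ℝ => ξ + t • w) (𝓝[>] 0) (𝓝 ξ) := by
      have : Tendsto (fun t : ℝ => ξ + t • w) (𝓝 0) (𝓝 (ξ + (0:ℝ) • w)) :=
        Continuous.tendsto (by fun_prop) 0
      rw [zero_smul, add_zero] at this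
      exact this.mono_left nhdsWithin_le_nhds
    have hVt : ∀ᶠ t : ℝ in 𝓝[>] 0, |V (ξ + t • w) - V ξ| < a / 8 := by
      have := (hV.tendsto ξ).comp hline
      filter_upwards [this.eventually (Metric.ball_mem_nhds (V ξ) (show 0 < a / 8 by positivity))]
        with t ht
      simpa [Real.dist_eq] using ht
    have hrt : ∀ᶠ t : ℝ in 𝓝[>] 0, |(r (ξ + t • w) - r ξ) / t| < ε / 2 := by
      have hd : HasDerivAt (fun t : ℝ => r (ξ + t • w)) (fderiv ℝ r ξ w) 0 :=
        ((hr.differentiable (by simp)) ξ).hasFDerivAt.hasLineDerivAt w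
      have h3 := (hasDerivAt_iff_tendsto_slope.1 hd).mono_left
        (nhdsWithin_mono 0 (fun t (ht : 0 < t) => ht.ne') : 𝓝[>] (0:ℝ) ≤ _)
      have hlt : |fderiv ℝ r ξ w| < ε / 2 := by
        have h4 := (h2 ξ le_rfl 0 (by simpa using (hmP _).1.le)).2.2 μ hμ
        calc |fderiv ℝ r ξ w| ≤ ‖fderiv ℝ r ξ‖ * ‖w‖ := (fderiv ℝ r ξ).le_opNorm w
          _ ≤ m ‖ξ‖ * ‖w‖ := by gcongr; exact (hrm ξ).2.2
          _ ≤ ε / 4 := h4.2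
          _ < ε / 2 := by linarith
      filter_upwards [h3.abs.eventually (Iio_mem_nhds hlt)] with t ht
      simpa [slope_def_field] using ht
    have het : ∀ᶠ t : ℝ in 𝓝[>] 0, e (q ξ + 1) * t < a := by
      have : Tendsto (fun t : ℝ => e (q ξ + 1) * t) (𝓝 0) (𝓝 (e (q ξ + 1) * 0)) :=
        Continuous.tendsto (by fun_prop) 0
      rw [mul_zero] at this
      exact (this.mono_left nhdsWithin_le_nhds).eventually (Iio_mem_nhds ha)
    have hεt : ∀ᶠ t : ℝ in 𝓝[>] 0, t < ε := nhdsWithin_le_nhds (Iio_mem_nhds hε)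
    filter_upwards [hVt, hrt, het, hεt, self_mem_nhdsWithin] with t hVt hrt het hεt ht0 z hz
    have ht0 : 0 < t := ht0
    set κ := (r (ξ + t • w) - r ξ) / t with hκ
    have hκt : r (ξ + t • w) = r ξ + κ * t := by rw [hκ]; field_simp; ring
    set ξ' := ξ - r ξ • z with hξ'
    have hnew : ξ + t • w - r (ξ + t • w) • z = ξ' + t • (w - κ • z) := by
      rw [hκt, hξ']
      module
    obtain ⟨h3, h4, h5⟩ := h2 ξ le_rfl _ (hu ξ z hz)
    rw [← sub_eq_add_neg, ← hξ'] at h3 h4 h5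
    have h6 := hVz (ξ + t • w) z hz
    rw [abs_le] at h3 h4 h6
    rw [abs_lt] at hVt
    have hmain : a / 2 ≤ V ξ' → V (ξ + t • w - r (ξ + t • w) • z) ≤ V ξ' - e (q ξ + 1) * t := by
      intro hVξ'
      have hn : ‖ξ'‖ ≤ ‖ξ‖ + 1 := by
        have h7 := hu ξ z hz
        rw [norm_neg] at h7
        exact (norm_sub_le _ _).trans (by linarith [(hmP ‖ξ‖).2.1])
      have hv : ‖w - κ • z - f ξ' μ‖ ≤ ε := by
        calc ‖w - κ • z - f ξ' μ‖ = ‖(w - f ξ' μ) - κ • z‖ := by congr 1; abel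
          _ ≤ ‖w - f ξ' μ‖ + ‖κ • z‖ := norm_sub_le _ _
          _ ≤ ε / 2 + ε / 2 := by
            gcongr
            · exact (h5 μ hμ).1
            · rw [norm_smul, Real.norm_eq_abs]
              exact (mul_le_of_le_one_right (abs_nonneg _) hz).trans hrt.le
          _ = ε := by ring
      have h8 := h1 ξ' hn hVξ' μ hμ _ hv t ht0.le hεt.le
      rw [hnew]
      refine h8.trans ?_
      have := mul_le_mul_of_nonneg_right (he (show q ξ' ≤ q ξ + 1 by linarith)) ht0.le
      linarith
    have hpos : 0 ≤ e (q ξ + 1) * t := mul_nonneg (hepos _).le ht0.le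
    refine ⟨?_, fun h3a => ?_⟩
    · rcases le_or_gt (a / 2) (V ξ') with hc | hc
      · exact max_le_max (by linarith [hmain hc]) le_rfl
      · refine max_le ?_ (le_max_right _ _)
        exact le_trans (by linarith) (le_max_right _ _)
    · have hc : 2 * a ≤ V ξ' := by linarith
      have h9 := hmain (by linarith)
      simp only [G]
      rw [max_eq_left (show 0 ≤ V ξ' - a by linarith)]
      exact max_le (by linarith) (by linarith)
  have hFd : ∀ ξ, DifferentiableAt ℝ (mollify r G) ξ := fun ξ =>
    (hF.differentiable (by simp)) ξ
  refine ⟨mollify r G, hF, fun ξ => ⟨?_, ?_⟩, fun ξ μ hμ => ?_, fun b => e (b + 1),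
    fun b b' hb => he (by linarith), fun b => hepos _, fun ξ h3a μ hμ => ?_⟩
  · have h := integral_unitKernel_mono (A := fun _ => max (V ξ - 2 * a) 0) (c := 0)
      continuous_const (hGξ ξ) fun z hz => by
        rw [add_zero]
        have := abs_le.1 (hVz ξ z hz)
        exact max_le_max (by linarith) le_rfl
    rwa [integral_const_mul, integral_unitKernel, mul_one, add_zero] at h
  · have h := integral_unitKernel_mono (B := fun _ => V ξ) (c := 0)
      (hGξ ξ) continuous_const fun z hz => by
        rw [add_zero]
        have := abs_le.1 (hVz ξ z hz)
        exact max_le (by linarith) (hV0 ξ)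
    rwa [integral_const_mul, integral_unitKernel, mul_one, add_zero] at h
  · rw [← neg_zero]
    refine fderiv_le_of_eventually_le (hFd ξ) ?_
    filter_upwards [hstep ξ μ hμ] with t ht
    have h := integral_unitKernel_mono (c := 0) (hGξ (ξ + t • f ξ μ)) (hGξ ξ)
      fun z hz => by rw [add_zero]; exact (ht z hz).1
    rw [zero_mul, sub_zero]
    rwa [add_zero] at h
  · refine fderiv_le_of_eventually_le (hFd ξ) ?_
    filter_upwards [hstep ξ μ hμ] with t ht
    exact integral_unitKernel_mono (c := -(e (q ξ + 1) * t)) (hGξ (ξ + t • f ξ μ)) (hGξ ξ)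
      fun z hz => by rw [← sub_eq_add_neg]; exact (ht z hz).2 h3a

end Mollification

/-- A continuous function that decays robustly along `f` can be replaced by a comparable smooth
function which decays along `f`. -/
theorem RobustDecay.exists_smooth {X : Type*} [NormedAddCommGroup X] [InnerProductSpace ℝ X]
    [FiniteDimensional ℝ X] [MeasurableSpace X] [BorelSpace X] {U : Type*} [PseudoMetricSpace U]
    {Ω : Set U} {f : X → U → X} {V q : X → ℝ} (hΩ : IsCompact Ω)
    (hf : Continuous fun p : X × U => f p.1 p.2) (hV : Continuous V) (hV0 : ∀ ξ, 0 ≤ V ξ)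
    (hq : Continuous q) (hdec : RobustDecay Ω f V q) :
    ∃ (W : X → ℝ) (Φ : ℝ → ℝ), ContDiff ℝ (⊤ : ℕ∞) W ∧ IsClassKInfty Φ ∧
      (∀ ξ, 0 ≤ W ξ ∧ Φ (V ξ) ≤ W ξ ∧ W ξ ≤ 2 * V ξ) ∧
      (∀ ξ, ∀ μ ∈ Ω, fderiv ℝ W ξ (f ξ μ) ≤ 0) ∧
      ∀ a, 0 < a → ∃ e : ℝ → ℝ, Antitone e ∧ (∀ b, 0 < e b) ∧
        ∀ ξ, a ≤ W ξ → ∀ μ ∈ Ω, fderiv ℝ W ξ (f ξ μ) ≤ -e (q ξ) := by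
  have hpos : ∀ k : ℕ, (0 : ℝ) < 1 / (k + 1) := fun k => by positivity
  choose F hF hFV hFd e he hepos hFe using fun k : ℕ =>
    hdec.exists_smooth_above hΩ hf hV hV0 hq (hpos k)
  obtain ⟨δ, hδ, hsm, hsum⟩ := exists_weights_contDiff_tsum F hF
  obtain ⟨hhs, hΦ⟩ := isClassKInfty_tsum_hinge hδ
  have hF0 : ∀ k ξ, 0 ≤ F k ξ := fun k ξ => (le_max_right _ _).trans (hFV k ξ).1
  have hgeo : ∀ ξ, HasSum (fun k : ℕ => (1 / 2 : ℝ) ^ k * V ξ) (2 * V ξ) := fun ξ =>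
    hasSum_geometric_two.mul_right (V ξ)
  have hle : ∀ ξ k, δ k * F k ξ ≤ (1 / 2 : ℝ) ^ k * V ξ := fun ξ k =>
    mul_le_mul (hδ k).2 (hFV k ξ).2 (hF0 k ξ) (by positivity)
  have hnn : ∀ ξ k, 0 ≤ δ k * F k ξ := fun ξ k => mul_nonneg (hδ k).1.le (hF0 k ξ)
  have hS : ∀ ξ, Summable fun k => δ k * F k ξ := fun ξ =>
    Summable.of_nonneg_of_le (hnn ξ) (hle ξ) (hgeo ξ).summable
  have hupper : ∀ ξ, ∑' k, δ k * F k ξ ≤ 2 * V ξ := fun ξ =>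
    hasSum_le (hle ξ) (hS ξ).hasSum (hgeo ξ)
  have hterm : ∀ ξ, ∀ μ ∈ Ω, ∀ k, δ k * fderiv ℝ (F k) ξ (f ξ μ) ≤ 0 := fun ξ μ hμ k =>
    mul_nonpos_of_nonneg_of_nonpos (hδ k).1.le (hFd k ξ μ hμ)
  refine ⟨_, _, hsm, hΦ, fun ξ => ⟨tsum_nonneg (hnn ξ), ?_, hupper ξ⟩,
    fun ξ μ hμ => (hsum ξ (f ξ μ)).nonpos (hterm ξ μ hμ), fun a ha => ?_⟩
  · refine (hhs (V ξ)).tsum_le_tsum (fun k => ?_) (hS ξ)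
    refine mul_le_mul_of_nonneg_left ?_ (hδ k).1.le
    have := (hFV k ξ).1
    rwa [mul_one_div] at this
  · obtain ⟨k, hk⟩ := exists_nat_one_div_lt (show (0 : ℝ) < a / 6 by positivity)
    refine ⟨fun b => δ k * e k b, fun b c hbc => mul_le_mul_of_nonneg_left (he k hbc) (hδ k).1.le,
      fun b => mul_pos (hδ k).1 (hepos k b), fun ξ hξ μ hμ => ?_⟩
    have h1 : 3 * (1 / ((k : ℝ) + 1)) ≤ V ξ := by
      have := hupper ξ
      linarith
    have h2 := hFe k ξ h1 μ hμ
    have h3 : fderiv ℝ (fun ξ => ∑' k, δ k * F k ξ) ξ (f ξ μ)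
        ≤ δ k * fderiv ℝ (F k) ξ (f ξ μ) := by
      have := le_hasSum (hsum ξ (f ξ μ)).neg k fun j _ => by
        have := hterm ξ μ hμ j
        linarith
      linarith
    have h4 := mul_le_mul_of_nonneg_left h2 (hδ k).1.le
    simp only [mul_neg] at h4
    exact h3.trans h4

/-- Grönwall's inequality in integral form. -/
theorem le_mul_exp_of_le_add_integral {u : ℝ → ℝ} {a L : ℝ} (hL : 0 ≤ L)
    (hu : ContinuousOn u (Ici 0)) (h : ∀ t, 0 ≤ t → u t ≤ a + ∫ s in (0 : ℝ)..t, L * u s)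
    {t : ℝ} (ht : 0 ≤ t) : u t ≤ a * Real.exp (L * t) := by
  set w : ℝ → ℝ := fun t => L * u (max t 0) with hw
  have hwc : Continuous w := continuous_const.mul
    (hu.comp_continuous (continuous_id.max continuous_const) fun t => mem_Ici.2 (le_max_right _ _))
  have hInt : ∀ t, 0 ≤ t → ∫ s in (0 : ℝ)..t, L * u s = ∫ s in (0 : ℝ)..t, w s := fun t ht =>
    intervalIntegral.integral_congr fun s hs => by
      rw [uIcc_of_le ht] at hs
      simp only [hw, max_eq_left hs.1]
  have hder : ∀ t, HasDerivAt (fun t => a + ∫ s in (0 : ℝ)..t, w s) (w t) t := fun t =>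
    (intervalIntegral.integral_hasDerivAt_right (hwc.intervalIntegrable _ _)
      (hwc.stronglyMeasurableAtFilter _ _) hwc.continuousAt).const_add a
  have key := le_gronwallBound_of_liminf_deriv_right_le (δ := a) (K := L) (ε := 0) (a := 0) (b := t)
    (f := fun t => a + ∫ s in (0 : ℝ)..t, w s) (f' := w)
    (fun s _ => (hder s).continuousAt.continuousWithinAt)
    (fun s _ r hr => (hder s).hasDerivWithinAt.liminf_right_slope_le hr) (by simp)
    (fun s hs => by
      have := h s hs.1
      rw [hInt s hs.1] at this
      simp only [hw, max_eq_left hs.1, add_zero] at this ⊢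
      exact mul_le_mul_of_nonneg_left this hL) t ⟨ht, le_rfl⟩
  rw [gronwallBound_ε0, sub_zero] at key
  have := h t ht
  rw [hInt t ht] at this
  exact this.trans key

/-- A bounded right-hand side along a solution of an integral equation is automatically
integrable: beyond the first time of non-integrability the solution would be constant. -/
theorem intervalIntegrable_of_integral_eq {X U : Type*} [NormedAddCommGroup X] [NormedSpace ℝ X]
    [TopologicalSpace U] [TopologicalSpace.PseudoMetrizableSpace U]
    [SecondCountableTopology U] [MeasurableSpace U]
    [BorelSpace U] {f : X → U → X} (hf : Continuous fun p : X × U => f p.1 p.2) {d : ℝ → U}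
    (hd : Measurable d) {ξ : X} {z : ℝ → X} {B : ℝ}
    (hz : ∀ t, 0 ≤ t → z t = ξ + ∫ s in (0 : ℝ)..t, f (z s) (d s))
    (hB : ∀ t, 0 ≤ t → ‖f (z t) (d t)‖ ≤ B) {t : ℝ} (ht : 0 ≤ t) :
    IntervalIntegrable (fun s => f (z s) (d s)) volume 0 t := by
  set g : ℝ → X := fun s => f (z s) (d s) with hg
  have hiff : ∀ t, 0 ≤ t → AEStronglyMeasurable g (volume.restrict (Ioc 0 t)) →
      IntervalIntegrable g volume 0 t := by
    intro t ht hm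
    rw [intervalIntegrable_iff_integrableOn_Ioc_of_le ht]
    refine IntegrableOn.of_bound measure_Ioc_lt_top hm B ?_
    filter_upwards [ae_restrict_mem measurableSet_Ioc] with s hs using hB s hs.1.le
  by_contra hbad
  set A : Set ℝ := {s | 0 ≤ s ∧ IntervalIntegrable g volume 0 s} with hA
  have hdown : ∀ s r, 0 ≤ r → r ≤ s → s ∈ A → r ∈ A := fun s r hr hrs hs =>
    ⟨hr, hs.2.mono_set (by
      rw [uIcc_of_le hr, uIcc_of_le hs.1]; exact Icc_subset_Icc_right hrs)⟩
  have hAt : ∀ s ∈ A, s ≤ t := fun s hs => by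
    by_contra hlt
    exact hbad (hdown s t ht (not_le.1 hlt).le hs).2
  have hA0 : (0 : ℝ) ∈ A := ⟨le_rfl, IntervalIntegrable.refl⟩
  have hbdd : BddAbove A := ⟨t, hAt⟩
  have hlow : ∀ r, 0 ≤ r → r < sSup A → r ∈ A := fun r hr hrs => by
    obtain ⟨s, hs, hrs⟩ := exists_lt_of_lt_csSup ⟨0, hA0⟩ hrs
    exact hdown s r hr hrs.le hs
  have hhigh : ∀ r, sSup A < r → g r = f ξ (d r) := fun r hr => by
    have hr0 : 0 ≤ r := (le_csSup hbdd hA0).trans hr.le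
    have hrA : ¬ IntervalIntegrable g volume 0 r := fun hi =>
      absurd (le_csSup hbdd (show r ∈ A from ⟨hr0, hi⟩)) (not_le.2 hr)
    have := hz r hr0
    rw [intervalIntegral.integral_undef hrA, add_zero] at this
    simp only [hg, this]
  have h1 : AEStronglyMeasurable g
      (volume.restrict (⋃ k : ℕ, Ioc 0 (sSup A - 1 / ((k : ℝ) + 1)))) := by
    rw [aestronglyMeasurable_iUnion_iff]
    intro k
    rcases lt_or_ge (sSup A - 1 / ((k : ℝ) + 1)) 0 with hneg | hnn
    · rw [Ioc_eq_empty (not_lt.2 hneg.le), Measure.restrict_empty]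
      exact aestronglyMeasurable_zero_measure _
    · have hmem := hlow _ hnn (sub_lt_self _ (by positivity))
      exact ((intervalIntegrable_iff_integrableOn_Ioc_of_le hnn).1 hmem.2).aestronglyMeasurable
  have h2 : AEStronglyMeasurable g (volume.restrict {sSup A}) := by
    rw [Measure.restrict_singleton, Real.volume_singleton, zero_smul]
    exact aestronglyMeasurable_zero_measure _
  have h3 : AEStronglyMeasurable g (volume.restrict (Ioi (sSup A))) := by
    have hm : AEStronglyMeasurable (fun r => f ξ (d r)) (volume.restrict (Ioi (sSup A))) :=
      ((hf.comp (Continuous.prodMk_right ξ)).stronglyMeasurable.comp_measurable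
        hd).aestronglyMeasurable
    refine hm.congr ?_
    filter_upwards [ae_restrict_mem measurableSet_Ioi] with r hr using (hhigh r hr).symm
  refine hbad (hiff t ht ?_)
  refine AEStronglyMeasurable.mono_set ?_
    (aestronglyMeasurable_union_iff.2 ⟨aestronglyMeasurable_union_iff.2 ⟨h1, h2⟩, h3⟩)
  intro r hr
  rcases lt_trichotomy r (sSup A) with hlt | heq | hgt
  · obtain ⟨k, hk⟩ := exists_nat_one_div_lt (sub_pos.2 hlt)
    exact Or.inl (Or.inl (mem_iUnion.2 ⟨k, hr.1, by linarith⟩))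
  · exact Or.inl (Or.inr heq)
  · exact Or.inr hgt

section Trajectories

variable {n m p : ℕ} {Ω : Set (EuclideanSpace ℝ (Fin m))}
  {f : EuclideanSpace ℝ (Fin n) → EuclideanSpace ℝ (Fin m) → EuclideanSpace ℝ (Fin n)}
  {h : EuclideanSpace ℝ (Fin n) → EuclideanSpace ℝ (Fin p)}
  {x : ℝ → EuclideanSpace ℝ (Fin n) → (ℝ → EuclideanSpace ℝ (Fin m)) → EuclideanSpace ℝ (Fin n)}

/-- Uniform bounds on the vector field along the trajectories starting in a ball. -/
theorem IsUBIBS.exists_bounds (hx : IsUBIBS Ω f x) (hΩ : IsCompact Ω)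
    (hf : LocallyLipschitz fun q : EuclideanSpace ℝ (Fin n) × EuclideanSpace ℝ (Fin m) =>
      f q.1 q.2) (R : ℝ) :
    ∃ ρ L B : ℝ, 0 ≤ L ∧ 0 ≤ B ∧
      (∀ ξ d, ‖ξ‖ ≤ R → MemMOmega Ω d → ∀ t, 0 ≤ t → ‖x t ξ d‖ ≤ ρ) ∧
      (∀ z w, ‖z‖ ≤ ρ → ‖w‖ ≤ ρ → ∀ μ ∈ Ω, ‖f z μ - f w μ‖ ≤ L * ‖z - w‖) ∧
      ∀ z, ‖z‖ ≤ ρ → ∀ μ ∈ Ω, ‖f z μ‖ ≤ B := by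
  obtain ⟨-, σ, c, hσ, -, hb⟩ := hx
  set ρ : ℝ := max (σ R) c
  have hK : IsCompact (Metric.closedBall (0 : EuclideanSpace ℝ (Fin n)) ρ ×ˢ Ω) :=
    (isCompact_closedBall _ _).prod hΩ
  obtain ⟨L, hL⟩ := (hf.locallyLipschitzOn (s := Metric.closedBall 0 ρ ×ˢ Ω)
    ).exists_lipschitzOnWith_of_compact hK
  obtain ⟨B, hB⟩ := hK.exists_bound_of_continuousOn hf.continuous.continuousOn
  have hmem : ∀ z : EuclideanSpace ℝ (Fin n), ‖z‖ ≤ ρ → ∀ μ ∈ Ω,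
      (z, μ) ∈ Metric.closedBall (0 : EuclideanSpace ℝ (Fin n)) ρ ×ˢ Ω := fun z hz μ hμ =>
    ⟨mem_closedBall_zero_iff.2 hz, hμ⟩
  refine ⟨ρ, L, max B 0, L.2, le_max_right _ _, fun ξ d hξ hd t ht =>
    (hb ξ d hd t ht).trans (max_le_max_right _ (hσ.mono (norm_nonneg _) hξ)),
    fun z w hz hw μ hμ => ?_, fun z hz μ hμ => (hB _ (hmem z hz μ hμ)).trans (le_max_left _ _)⟩
  have := hL.dist_le_mul _ (hmem z hz μ hμ) _ (hmem w hw μ hμ)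
  simpa [dist_eq_norm, Prod.norm_def] using this

theorem IsSolutionMapOmega.apply_zero (hx : IsSolutionMapOmega Ω f x) (ξ)
    {d : ℝ → EuclideanSpace ℝ (Fin m)} (hd : MemMOmega Ω d) : x 0 ξ d = ξ := by
  simpa using hx ξ d hd 0 self_mem_Ici

theorem IsUBIBS.intervalIntegrable (hx : IsUBIBS Ω f x) (hΩ : IsCompact Ω)
    (hf : LocallyLipschitz fun q : EuclideanSpace ℝ (Fin n) × EuclideanSpace ℝ (Fin m) =>
      f q.1 q.2) (ξ) {d : ℝ → EuclideanSpace ℝ (Fin m)} (hd : MemMOmega Ω d) {s t : ℝ}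
    (hs : 0 ≤ s) (ht : 0 ≤ t) :
    IntervalIntegrable (fun r => f (x r ξ d) (d r)) volume s t := by
  obtain ⟨ρ, L, B, -, -, hρ, -, hB⟩ := hx.exists_bounds hΩ hf ‖ξ‖
  have h0 : ∀ t, 0 ≤ t → IntervalIntegrable (fun r => f (x r ξ d) (d r)) volume 0 t :=
    fun t ht => intervalIntegrable_of_integral_eq (z := fun r => x r ξ d) hf.continuous hd.1
      (fun t ht => hx.1 ξ d hd t ht)
      (fun t ht => hB _ (hρ ξ d le_rfl hd t ht) _ (hd.2 t ht)) ht
  exact (h0 s hs).symm.trans (h0 t ht)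

theorem IsUBIBS.sub_eq_integral (hx : IsUBIBS Ω f x) (hΩ : IsCompact Ω)
    (hf : LocallyLipschitz fun q : EuclideanSpace ℝ (Fin n) × EuclideanSpace ℝ (Fin m) =>
      f q.1 q.2) (ξ) {d : ℝ → EuclideanSpace ℝ (Fin m)} (hd : MemMOmega Ω d) {s t : ℝ}
    (hs : 0 ≤ s) (ht : 0 ≤ t) :
    x t ξ d - x s ξ d = ∫ r in s..t, f (x r ξ d) (d r) := by
  rw [hx.1 ξ d hd t ht, hx.1 ξ d hd s hs, add_sub_add_left_eq_sub,
    intervalIntegral.integral_interval_sub_left (hx.intervalIntegrable hΩ hf ξ hd le_rfl ht)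
      (hx.intervalIntegrable hΩ hf ξ hd le_rfl hs)]

theorem IsUBIBS.continuousOn (hx : IsUBIBS Ω f x) (hΩ : IsCompact Ω)
    (hf : LocallyLipschitz fun q : EuclideanSpace ℝ (Fin n) × EuclideanSpace ℝ (Fin m) =>
      f q.1 q.2) (ξ) {d : ℝ → EuclideanSpace ℝ (Fin m)} (hd : MemMOmega Ω d) :
    ContinuousOn (fun t => x t ξ d) (Ici 0) := by
  obtain ⟨ρ, L, B, -, hB0, hρ, -, hB⟩ := hx.exists_bounds hΩ hf ‖ξ‖
  refine (LipschitzOnWith.of_dist_le_mul (K := ⟨B, hB0⟩) fun t ht s hs => ?_).continuousOn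
  rw [dist_eq_norm, hx.sub_eq_integral hΩ hf ξ hd hs ht, Real.dist_eq]
  refine intervalIntegral.norm_integral_le_of_norm_le_const fun r hr => ?_
  have hr0 : 0 ≤ r := (le_min (mem_Ici.1 hs) ht).trans (uIoc_subset_uIcc hr).1
  exact hB _ (hρ ξ d le_rfl hd r hr0) _ (hd.2 r hr0)

/-- Trajectories driven by the same disturbance, up to a time shift, separate at most
exponentially. -/
theorem IsUBIBS.exists_norm_sub_le_exp (hx : IsUBIBS Ω f x) (hΩ : IsCompact Ω)
    (hf : LocallyLipschitz fun q : EuclideanSpace ℝ (Fin n) × EuclideanSpace ℝ (Fin m) =>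
      f q.1 q.2) (R : ℝ) :
    ∃ L : ℝ, 0 ≤ L ∧ ∀ ξ η d₁ d₂, ‖ξ‖ ≤ R → ‖η‖ ≤ R → MemMOmega Ω d₁ → MemMOmega Ω d₂ →
      ∀ τ, 0 ≤ τ → (∀ s, 0 ≤ s → d₁ (τ + s) = d₂ s) → ∀ s, 0 ≤ s →
        ‖x (τ + s) ξ d₁ - x s η d₂‖ ≤ ‖x τ ξ d₁ - η‖ * Real.exp (L * s) := by
  obtain ⟨ρ, L, B, hL0, -, hρ, hL, -⟩ := hx.exists_bounds hΩ hf R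
  refine ⟨L, hL0, fun ξ η d₁ d₂ hξ hη hd₁ hd₂ τ hτ hd s hs => ?_⟩
  have hcont : ContinuousOn (fun s => ‖x (τ + s) ξ d₁ - x s η d₂‖) (Ici 0) := by
    refine (ContinuousOn.sub ?_ (hx.continuousOn hΩ hf η hd₂)).norm
    exact (hx.continuousOn hΩ hf ξ hd₁).comp (by fun_prop) fun s hs => add_nonneg hτ hs
  refine le_mul_exp_of_le_add_integral hL0 hcont (fun s hs => ?_) hs
  have h1 := hx.sub_eq_integral hΩ hf ξ hd₁ hτ (add_nonneg hτ hs)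
  have h2 := hx.sub_eq_integral hΩ hf η hd₂ le_rfl hs
  rw [hx.1.apply_zero η hd₂] at h2
  have hi1 : IntervalIntegrable (fun r => f (x (τ + r) ξ d₁) (d₁ (τ + r))) volume 0 s := by
    have := (hx.intervalIntegrable hΩ hf ξ hd₁ hτ (add_nonneg hτ hs)).comp_add_left τ
    simpa using this
  have hi2 := hx.intervalIntegrable hΩ hf η hd₂ le_rfl hs
  have h3 : x (τ + s) ξ d₁ - x s η d₂ = (x τ ξ d₁ - η) +
      ∫ r in (0 : ℝ)..s, (f (x (τ + r) ξ d₁) (d₁ (τ + r)) - f (x r η d₂) (d₂ r)) := by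
    rw [intervalIntegral.integral_sub hi1 hi2, ← h2,
      intervalIntegral.integral_comp_add_left (fun r => f (x r ξ d₁) (d₁ r)) τ, add_zero, ← h1]
    abel
  rw [h3]
  refine (norm_add_le _ _).trans (add_le_add le_rfl ?_)
  refine intervalIntegral.norm_integral_le_of_norm_le hs (ae_of_all _ fun r hr => ?_) ?_
  · rw [hd r hr.1.le]
    exact hL _ _ (hρ ξ d₁ hξ hd₁ _ (add_nonneg hτ hr.1.le)) (hρ η d₂ hη hd₂ _ hr.1.le) _
      (hd₂.2 r hr.1.le)
  · refine ContinuousOn.intervalIntegrable ?_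
    rw [uIcc_of_le hs]
    exact (hcont.mono Icc_subset_Ici_self).const_mul L |>.congr fun _ _ => rfl

theorem IsUBIBS.exists_output_le_add (hx : IsUBIBS Ω f x) (hΩ : IsCompact Ω)
    (hf : LocallyLipschitz fun q : EuclideanSpace ℝ (Fin n) × EuclideanSpace ℝ (Fin m) =>
      f q.1 q.2) (hh : LocallyLipschitz h) (R T : ℝ) :
    ∃ C : ℝ, 0 ≤ C ∧ ∀ ξ η d₁ d₂, ‖ξ‖ ≤ R → ‖η‖ ≤ R → MemMOmega Ω d₁ → MemMOmega Ω d₂ →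
      ∀ τ, 0 ≤ τ → (∀ s, 0 ≤ s → d₁ (τ + s) = d₂ s) → ∀ s, 0 ≤ s → s ≤ T →
        ‖h (x s η d₂)‖ ≤ ‖h (x (τ + s) ξ d₁)‖ + C * ‖x τ ξ d₁ - η‖ := by
  obtain ⟨ρ, -, -, -, -, hρ, -, -⟩ := hx.exists_bounds hΩ hf R
  obtain ⟨L, hL0, hL⟩ := hx.exists_norm_sub_le_exp hΩ hf R
  obtain ⟨K, hK⟩ := (hh.locallyLipschitzOn (s := Metric.closedBall 0 ρ)
    ).exists_lipschitzOnWith_of_compact (isCompact_closedBall _ _)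
  refine ⟨K * Real.exp (L * T), by positivity,
    fun ξ η d₁ d₂ hξ hη hd₁ hd₂ τ hτ hd s hs hsT => ?_⟩
  have h1 := hK.dist_le_mul (x s η d₂) (mem_closedBall_zero_iff.2 (hρ η d₂ hη hd₂ s hs))
    (x (τ + s) ξ d₁) (mem_closedBall_zero_iff.2 (hρ ξ d₁ hξ hd₁ _ (add_nonneg hτ hs)))
  rw [dist_comm (x s η d₂), dist_eq_norm, dist_eq_norm] at h1
  have h2 := hL ξ η d₁ d₂ hξ hη hd₁ hd₂ τ hτ hd s hs
  have h3 : Real.exp (L * s) ≤ Real.exp (L * T) :=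
    Real.exp_le_exp.2 (mul_le_mul_of_nonneg_left hsT hL0)
  have h4 := norm_sub_norm_le (h (x s η d₂)) (h (x (τ + s) ξ d₁))
  calc ‖h (x s η d₂)‖ ≤ ‖h (x (τ + s) ξ d₁)‖ + K * ‖x (τ + s) ξ d₁ - x s η d₂‖ := by linarith
    _ ≤ ‖h (x (τ + s) ξ d₁)‖ + K * (‖x τ ξ d₁ - η‖ * Real.exp (L * T)) := by
        gcongr
        exact h2.trans (mul_le_mul_of_nonneg_left h3 (norm_nonneg _))
    _ = _ := by ring

/-- First-order expansion of trajectories under an initially constant disturbance. -/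
theorem IsUBIBS.exists_norm_sub_le_sq (hx : IsUBIBS Ω f x) (hΩ : IsCompact Ω)
    (hf : LocallyLipschitz fun q : EuclideanSpace ℝ (Fin n) × EuclideanSpace ℝ (Fin m) =>
      f q.1 q.2) (R : ℝ) :
    ∃ C : ℝ, 0 ≤ C ∧ ∀ ξ d, ‖ξ‖ ≤ R → MemMOmega Ω d → ∀ μ ∈ Ω, ∀ t, 0 ≤ t →
      (∀ s, 0 ≤ s → s < t → d s = μ) → ‖x t ξ d - (ξ + t • f ξ μ)‖ ≤ C * t ^ 2 := by
  obtain ⟨ρ, L, B, hL0, hB0, hρ, hL, hB⟩ := hx.exists_bounds hΩ hf R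
  refine ⟨L * B, by positivity, fun ξ d hξ hd μ hμ t ht hdμ => ?_⟩
  have hx0 := hx.1.apply_zero ξ hd
  have hξρ : ‖ξ‖ ≤ ρ := by simpa [hx0] using hρ ξ d hξ hd 0 le_rfl
  have hlin : ∀ s, 0 ≤ s → ‖x s ξ d - ξ‖ ≤ B * s := fun s hs => by
    have h1 := hx.sub_eq_integral hΩ hf ξ hd le_rfl hs
    rw [hx0] at h1
    have h2 : ‖∫ r in (0 : ℝ)..s, f (x r ξ d) (d r)‖ ≤ B * |s - 0| :=
      intervalIntegral.norm_integral_le_of_norm_le_const fun r hr => by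
        rw [uIoc_of_le hs] at hr
        exact hB _ (hρ ξ d hξ hd r hr.1.le) _ (hd.2 r hr.1.le)
    rw [sub_zero, abs_of_nonneg hs] at h2
    rwa [h1]
  have h1 := hx.sub_eq_integral hΩ hf ξ hd le_rfl ht
  rw [hx0] at h1
  have h2 : x t ξ d - (ξ + t • f ξ μ) = ∫ r in (0 : ℝ)..t, (f (x r ξ d) (d r) - f ξ μ) := by
    rw [intervalIntegral.integral_sub (hx.intervalIntegrable hΩ hf ξ hd le_rfl ht)
      intervalIntegrable_const, ← h1, intervalIntegral.integral_const, sub_zero]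
    abel
  have h3 : ‖∫ r in (0 : ℝ)..t, (f (x r ξ d) (d r) - f ξ μ)‖ ≤ L * (B * t) * |t - 0| := by
    refine intervalIntegral.norm_integral_le_of_norm_le_const_ae ?_
    have hne : ∀ᵐ r : ℝ, r ≠ t := Measure.ae_ne volume t
    filter_upwards [hne] with r hrt hr
    rw [uIoc_of_le ht] at hr
    rw [hdμ r hr.1.le (lt_of_le_of_ne hr.2 hrt)]
    refine (hL _ _ (hρ ξ d hξ hd r hr.1.le) hξρ μ hμ).trans ?_
    gcongr
    exact (hlin r hr.1.le).trans (mul_le_mul_of_nonneg_left hr.2 hB0)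
  rw [h2]
  refine h3.trans (le_of_eq ?_)
  rw [sub_zero, abs_of_nonneg ht]
  ring

end Trajectories

section OutputSup

variable {n m p : ℕ} {Ω : Set (EuclideanSpace ℝ (Fin m))}
  {f : EuclideanSpace ℝ (Fin n) → EuclideanSpace ℝ (Fin m) → EuclideanSpace ℝ (Fin n)}
  {h : EuclideanSpace ℝ (Fin n) → EuclideanSpace ℝ (Fin p)}
  {x : ℝ → EuclideanSpace ℝ (Fin n) → (ℝ → EuclideanSpace ℝ (Fin m)) → EuclideanSpace ℝ (Fin n)}
  {β : ℝ → ℝ → ℝ} {q : EuclideanSpace ℝ (Fin n) → ℝ}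

/-- The increasing weight applied to the output along trajectories. -/
def timeWeight (t : ℝ) : ℝ := 2 - 1 / (1 + t)

theorem one_le_timeWeight {t : ℝ} (ht : 0 ≤ t) : 1 ≤ timeWeight t := by
  have : 1 / (1 + t) ≤ 1 := by
    rw [div_le_one (by linarith)]
    linarith
  unfold timeWeight
  linarith

theorem timeWeight_le_two {t : ℝ} (ht : 0 ≤ t) : timeWeight t ≤ 2 := by
  have : 0 ≤ 1 / (1 + t) := by positivity
  unfold timeWeight
  linarith

theorem timeWeight_le_mul {s t T κ : ℝ} (hs : 0 ≤ s) (hsT : s ≤ T) (ht : 0 ≤ t) (ht1 : t ≤ 1)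
    (hκ0 : 0 ≤ κ) (hκ : κ ≤ 1 / (2 * (1 + T) * (2 + T))) :
    timeWeight s ≤ (1 - κ * t) * timeWeight (t + s) := by
  have h1 : 0 < 1 + s := by linarith
  have h2 : 0 < 1 + (t + s) := by linarith
  have hT : 0 < 1 + T := by linarith
  have hT2 : 0 < 2 + T := by linarith
  have h3 : timeWeight (t + s) - timeWeight s = t * (1 / ((1 + s) * (1 + (t + s)))) := by
    unfold timeWeight
    field_simp
    ring
  have h4 : 2 * κ ≤ 1 / ((1 + s) * (1 + (t + s))) := by
    have : 2 * (1 / (2 * (1 + T) * (2 + T))) = 1 / ((1 + T) * (2 + T)) := by field_simp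
    have h5 : 1 / ((1 + T) * (2 + T)) ≤ 1 / ((1 + s) * (1 + (t + s))) := by
      apply one_div_le_one_div_of_le (by positivity)
      apply mul_le_mul <;> linarith
    linarith
  have h5 := mul_le_mul_of_nonneg_left h4 ht
  have h6 := mul_le_mul_of_nonneg_left (timeWeight_le_two (add_nonneg ht hs)) (mul_nonneg hκ0 ht)
  nlinarith

/-- The supremum of the weighted output over all trajectories from `ξ`. -/
def outputSup (Ω : Set (EuclideanSpace ℝ (Fin m)))
    (h : EuclideanSpace ℝ (Fin n) → EuclideanSpace ℝ (Fin p))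
    (x : ℝ → EuclideanSpace ℝ (Fin n) → (ℝ → EuclideanSpace ℝ (Fin m)) →
      EuclideanSpace ℝ (Fin n)) (ξ : EuclideanSpace ℝ (Fin n)) : ℝ :=
  sSup {r | ∃ t d, 0 ≤ t ∧ MemMOmega Ω d ∧ r = ‖h (x t ξ d)‖ * timeWeight t}

theorem memMOmega_const {μ : EuclideanSpace ℝ (Fin m)} (hμ : μ ∈ Ω) : MemMOmega Ω fun _ => μ :=
  ⟨measurable_const, fun _ _ => hμ⟩

theorem outputSup_le (hne : Ω.Nonempty) {ξ : EuclideanSpace ℝ (Fin n)} {c : ℝ}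
    (hc : ∀ t d, 0 ≤ t → MemMOmega Ω d → ‖h (x t ξ d)‖ * timeWeight t ≤ c) :
    outputSup Ω h x ξ ≤ c := by
  obtain ⟨μ, hμ⟩ := hne
  refine csSup_le ⟨_, 0, _, le_rfl, memMOmega_const hμ, rfl⟩ ?_
  rintro _ ⟨t, d, ht, hd, rfl⟩
  exact hc t d ht hd

theorem norm_mul_timeWeight_le {ξ : EuclideanSpace ℝ (Fin n)} {d : ℝ → EuclideanSpace ℝ (Fin m)}
    {t c : ℝ} (ht : 0 ≤ t) (hc : ‖h (x t ξ d)‖ ≤ c) : ‖h (x t ξ d)‖ * timeWeight t ≤ 2 * c := by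
  have h1 := mul_le_mul_of_nonneg_left (timeWeight_le_two ht) (norm_nonneg (h (x t ξ d)))
  linarith

theorem outputSup_le_two_mul (hne : Ω.Nonempty) {ξ : EuclideanSpace ℝ (Fin n)} {c : ℝ}
    (hc : ∀ d, MemMOmega Ω d → ∀ t ∈ Ici (0 : ℝ), ‖h (x t ξ d)‖ ≤ c) :
    outputSup Ω h x ξ ≤ 2 * c :=
  outputSup_le hne fun t d ht hd => norm_mul_timeWeight_le ht (hc d hd t ht)

theorem le_outputSup {ξ : EuclideanSpace ℝ (Fin n)} {c : ℝ}
    (hc : ∀ d, MemMOmega Ω d → ∀ t ∈ Ici (0 : ℝ), ‖h (x t ξ d)‖ ≤ c)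
    {d : ℝ → EuclideanSpace ℝ (Fin m)} (hd : MemMOmega Ω d) {t : ℝ} (ht : 0 ≤ t) :
    ‖h (x t ξ d)‖ * timeWeight t ≤ outputSup Ω h x ξ := by
  refine le_csSup ⟨2 * c, ?_⟩ ⟨t, d, ht, hd, rfl⟩
  rintro _ ⟨t, d, ht, hd, rfl⟩
  exact norm_mul_timeWeight_le ht (hc d hd t ht)

theorem IsClassKL.le_apply_zero (hβ : IsClassKL β) {s t : ℝ} (hs : 0 ≤ s) (ht : 0 ≤ t) :
    β s t ≤ β s 0 :=
  (hβ.2 s hs).1 self_mem_Ici ht ht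

theorem IsClassKL.exists_time_le (hβ : IsClassKL β) {b a : ℝ} (hb : 0 ≤ b) (ha : 0 < a) :
    ∃ T, 0 ≤ T ∧ ∀ r s, 0 ≤ r → r ≤ b → T ≤ s → β r s ≤ a := by
  obtain ⟨T, hT⟩ := eventually_atTop.1 ((hβ.2 b hb).2.eventually (gt_mem_nhds ha))
  refine ⟨max T 0, le_max_right _ _, fun r s hr hrb hs => ?_⟩
  have hs0 : 0 ≤ s := (le_max_right _ _).trans hs
  exact ((hβ.1 s hs0).mono hr hrb).trans (hT s ((le_max_left _ _).trans hs)).le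

theorem norm_le_outputSup (hx : IsSolutionMapOmega Ω f x) (hne : Ω.Nonempty)
    {ξ : EuclideanSpace ℝ (Fin n)} {c : ℝ}
    (hc : ∀ d, MemMOmega Ω d → ∀ t ∈ Ici (0 : ℝ), ‖h (x t ξ d)‖ ≤ c) :
    ‖h ξ‖ ≤ outputSup Ω h x ξ := by
  obtain ⟨μ, hμ⟩ := hne
  have h1 := le_outputSup hc (memMOmega_const hμ) le_rfl
  rw [hx.apply_zero ξ (memMOmega_const hμ)] at h1
  exact (le_mul_of_one_le_right (norm_nonneg _) (one_le_timeWeight le_rfl)).trans h1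

theorem output_le_apply_zero (hβ : IsClassKL β) (hq0 : ∀ ξ, 0 ≤ q ξ)
    (hb : ∀ ξ d, MemMOmega Ω d → ∀ t ∈ Ici (0 : ℝ), ‖h (x t ξ d)‖ ≤ β (q ξ) t) (ξ) :
    ∀ d, MemMOmega Ω d → ∀ t ∈ Ici (0 : ℝ), ‖h (x t ξ d)‖ ≤ β (q ξ) 0 := fun d hd t ht =>
  (hb ξ d hd t ht).trans (hβ.le_apply_zero (hq0 ξ) ht)

theorem continuous_outputSup (hx : IsUBIBS Ω f x) (hΩ : IsCompact Ω) (hne : Ω.Nonempty)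
    (hf : LocallyLipschitz fun q : EuclideanSpace ℝ (Fin n) × EuclideanSpace ℝ (Fin m) =>
      f q.1 q.2) (hh : LocallyLipschitz h) (hβ : IsClassKL β) (hq : Continuous q)
    (hq0 : ∀ ξ, 0 ≤ q ξ)
    (hb : ∀ ξ d, MemMOmega Ω d → ∀ t ∈ Ici (0 : ℝ), ‖h (x t ξ d)‖ ≤ β (q ξ) t) :
    Continuous (outputSup Ω h x) := by
  have key : ∀ R a : ℝ, 0 < a → ∃ M, 0 ≤ M ∧ ∀ ξ η, ‖ξ‖ ≤ R → ‖η‖ ≤ R →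
      outputSup Ω h x η ≤ outputSup Ω h x ξ + M * ‖ξ - η‖ + a := by
    intro R a ha
    obtain ⟨Q, hQ⟩ := (isCompact_closedBall (0 : EuclideanSpace ℝ (Fin n)) R
      ).exists_bound_of_continuousOn hq.continuousOn
    obtain ⟨T, -, hT⟩ := hβ.exists_time_le (le_max_right Q 0) (half_pos ha)
    obtain ⟨C, hC0, hC⟩ := hx.exists_output_le_add hΩ hf hh R T
    refine ⟨2 * C, by positivity, fun ξ η hξ hη => outputSup_le hne fun t d ht hd => ?_⟩
    have hle := le_outputSup (output_le_apply_zero hβ hq0 hb ξ) hd ht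
    have hM : 0 ≤ C * ‖ξ - η‖ := by positivity
    have hV : 0 ≤ outputSup Ω h x ξ := (norm_nonneg _).trans
      (norm_le_outputSup hx.1 hne (output_le_apply_zero hβ hq0 hb ξ))
    rcases le_total T t with hTt | htT
    · have hqη : q η ≤ max Q 0 :=
        ((le_abs_self _).trans (hQ η (mem_closedBall_zero_iff.2 hη))).trans (le_max_left _ _)
      have := norm_mul_timeWeight_le ht ((hb η d hd t ht).trans (hT (q η) t (hq0 η) hqη hTt))
      linarith
    · have h1 := hC ξ η d d hξ hη hd hd 0 le_rfl (fun s _ => by rw [zero_add]) t ht htT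
      rw [zero_add, hx.1.apply_zero ξ hd] at h1
      have hw := one_le_timeWeight ht
      have h2 := mul_le_mul_of_nonneg_right h1 (zero_le_one.trans hw)
      have h3 := mul_le_mul_of_nonneg_left (timeWeight_le_two ht) hM
      linarith
  rw [Metric.continuous_iff]
  intro ξ a ha
  obtain ⟨M, hM0, hM⟩ := key (‖ξ‖ + 1) (a / 2) (half_pos ha)
  refine ⟨min 1 (a / (2 * (M + 1))), by positivity, fun η hη => ?_⟩
  have hη1 : ‖η - ξ‖ < 1 := by
    rw [← dist_eq_norm]; exact hη.trans_le (min_le_left _ _)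
  have hη2 : M * ‖η - ξ‖ < a / 2 := by
    have h1 : ‖η - ξ‖ < a / (2 * (M + 1)) := by
      rw [← dist_eq_norm]; exact hη.trans_le (min_le_right _ _)
    rw [lt_div_iff₀ (by positivity)] at h1
    nlinarith [norm_nonneg (η - ξ)]
  have hηR : ‖η‖ ≤ ‖ξ‖ + 1 := by
    have := norm_le_norm_add_norm_sub' η ξ
    linarith
  have h1 := hM ξ η (by linarith) hηR
  have h2 := hM η ξ hηR (by linarith)
  rw [norm_sub_rev] at h1
  rw [Real.dist_eq, abs_lt]
  constructor <;> linarith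

theorem robustDecay_outputSup (hx : IsUBIBS Ω f x) (hΩ : IsCompact Ω) (hne : Ω.Nonempty)
    (hf : LocallyLipschitz fun q : EuclideanSpace ℝ (Fin n) × EuclideanSpace ℝ (Fin m) =>
      f q.1 q.2) (hh : LocallyLipschitz h) (hβ : IsClassKL β) (hq : Continuous q)
    (hq0 : ∀ ξ, 0 ≤ q ξ)
    (hb : ∀ ξ d, MemMOmega Ω d → ∀ t ∈ Ici (0 : ℝ), ‖h (x t ξ d)‖ ≤ β (q ξ) t) :
    RobustDecay Ω f (outputSup Ω h x) q := by
  intro a ha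
  obtain ⟨κ, hκ, hκP⟩ := exists_antitone_choice
    (fun b c => ∃ T, 0 ≤ T ∧ c ≤ 1 / (2 * (1 + T) * (2 + T)) ∧
      ∀ r s, 0 ≤ r → r ≤ b + 1 → T ≤ s → β r s ≤ a / 4)
    (fun b b' c c' ⟨T, hT0, hcT, hT⟩ hb' _ hc' =>
      ⟨T, hT0, hc'.trans hcT, fun r s hr hrb hs => hT r s hr (by linarith) hs⟩)
    (fun b => by
      obtain ⟨T, hT0, hT⟩ := hβ.exists_time_le (le_max_right (b + 1) 0) (by linarith : 0 < a / 4)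
      exact ⟨1 / (2 * (1 + T) * (2 + T)), by positivity, T, hT0, le_rfl,
        fun r s hr hrb hs => hT r s hr (hrb.trans (le_max_left _ _)) hs⟩)
  refine ⟨fun b => κ b * (a / 2), fun b c hbc => mul_le_mul_of_nonneg_right (hκ hbc) (by linarith),
    fun b => mul_pos (hκP b).1 (by linarith), fun R => ?_⟩
  obtain ⟨Q, hQ⟩ := (isCompact_closedBall (0 : EuclideanSpace ℝ (Fin n)) R
    ).exists_bound_of_continuousOn hq.continuousOn
  obtain ⟨B, hB⟩ := ((isCompact_closedBall (0 : EuclideanSpace ℝ (Fin n)) R).prod hΩ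
    ).exists_bound_of_continuousOn hf.continuous.continuousOn
  obtain ⟨C₁, hC₁0, hC₁⟩ := hx.exists_output_le_add hΩ hf hh (R + 1) (1 / κ Q)
  obtain ⟨C₂, hC₂0, hC₂⟩ := hx.exists_norm_sub_le_sq hΩ hf R
  obtain ⟨ω, hω0, hω⟩ := Metric.uniformContinuousOn_iff.1
    ((isCompact_closedBall (0 : EuclideanSpace ℝ (Fin n)) (R + 1)
      ).uniformContinuousOn_of_continuous hq.continuousOn) 1 one_pos
  have hκQ := (hκP Q).1
  obtain ⟨ε, hε0, hε1, hεB, hεω, hεC⟩ : ∃ ε : ℝ, 0 < ε ∧ ε ≤ 1 ∧ ε * (|B| + 1) ≤ 1 ∧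
      ε * (|B| + 1) < ω ∧ 2 * C₁ * ((C₂ + 1) * ε) ≤ κ Q * (a / 2) := by
    have ht : ∀ c : ℝ, Tendsto (fun ε : ℝ => ε * c) (𝓝[>] 0) (𝓝 0) := fun c => by
      have : Tendsto (fun ε : ℝ => ε * c) (𝓝 0) (𝓝 (0 * c)) :=
        tendsto_id.mul_const c
      rw [zero_mul] at this
      exact this.mono_left nhdsWithin_le_nhds
    obtain ⟨ε, h1, h2, h3, h4, h5⟩ := ((eventually_mem_nhdsWithin (a := (0 : ℝ)) (s := Ioi 0)).and
      (((ht 1).eventually (gt_mem_nhds one_pos)).and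
      (((ht (|B| + 1)).eventually (gt_mem_nhds one_pos)).and
      (((ht (|B| + 1)).eventually (gt_mem_nhds hω0)).and
      ((ht (2 * C₁ * (C₂ + 1))).eventually
        (gt_mem_nhds (show 0 < κ Q * (a / 2) by positivity))))))).exists
    exact ⟨ε, h1, by linarith, h3.le, h4, by linarith⟩
  refine ⟨ε, hε0, fun ξ hξ haV μ hμ v hv t ht htε => ?_⟩
  have hξm : ξ ∈ Metric.closedBall (0 : EuclideanSpace ℝ (Fin n)) R := mem_closedBall_zero_iff.2 hξ
  have hvB : ‖v‖ ≤ |B| + 1 := by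
    have h1 := norm_le_norm_add_norm_sub' v (f ξ μ)
    have h2 := hB (ξ, μ) ⟨hξm, hμ⟩
    have h3 := le_abs_self B
    simp only at h2
    linarith
  have htv : ‖t • v‖ ≤ ε * (|B| + 1) := by
    rw [norm_smul, Real.norm_of_nonneg ht]
    exact mul_le_mul htε hvB (norm_nonneg _) hε0.le
  set η := ξ + t • v with hη
  have hηR : ‖η‖ ≤ R + 1 := (norm_add_le _ _).trans (by linarith)
  have hqη : q η ≤ q ξ + 1 := by
    have := hω η (mem_closedBall_zero_iff.2 hηR) ξ
      (mem_closedBall_zero_iff.2 (by linarith)) (by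
        rw [dist_eq_norm, hη, add_sub_cancel_left]
        exact htv.trans_lt hεω)
    rw [Real.dist_eq] at this
    linarith [le_abs_self (q η - q ξ)]
  obtain ⟨hκξ, hκ1, T, hT0, hκT, hT⟩ := hκP (q ξ)
  have hκle : κ Q ≤ κ (q ξ) := hκ ((le_abs_self _).trans (hQ ξ hξm))
  have hTQ : T ≤ 1 / κ Q := by
    have h1 := (le_div_iff₀ (by positivity)).1 hκT
    have h2 : T * κ Q ≤ (2 * (1 + T) * (2 + T)) * κ (q ξ) :=
      mul_le_mul (by nlinarith) hκle hκQ.le (by positivity)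
    rw [le_div_iff₀ hκQ]
    linarith
  have ht1 : t ≤ 1 := htε.trans hε1
  have hκt : κ (q ξ) * t ≤ 1 := mul_le_one₀ hκ1 ht ht1
  refine outputSup_le hne fun s d hs hd => ?_
  rcases le_total T s with hTs | hsT
  · have h1 := norm_mul_timeWeight_le hs ((hb η d hd s hs).trans (hT (q η) s (hq0 η) hqη hTs))
    have h2 := mul_le_mul_of_nonneg_right hκt (show 0 ≤ a / 2 by linarith)
    linarith
  · set d' : ℝ → EuclideanSpace ℝ (Fin m) := fun r => if r < t then μ else d (r - t) with hd'
    have hd'm : MemMOmega Ω d' := by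
      refine ⟨Measurable.ite measurableSet_Iio measurable_const
        (hd.1.comp (measurable_id.sub_const t)), fun r _ => ?_⟩
      simp only [hd']
      split_ifs with hrt
      · exact hμ
      · exact hd.2 _ (sub_nonneg.2 (not_lt.1 hrt))
    have h1 := hC₁ ξ η d' d (by linarith) hηR hd'm hd t ht (fun r hr => by
      simp only [hd', not_lt.2 (le_add_of_nonneg_right hr), if_false, add_sub_cancel_left]) s hs
      (hsT.trans hTQ)
    have h2 := hC₂ ξ d' hξ hd'm μ hμ t ht fun r _ hrt => by simp only [hd', hrt, if_true]
    have h3 : ‖x t ξ d' - η‖ ≤ (C₂ + 1) * ε * t := by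
      have e1 : x t ξ d' - η = (x t ξ d' - (ξ + t • f ξ μ)) - t • (v - f ξ μ) := by
        rw [hη, smul_sub]
        abel
      have e2 : ‖t • (v - f ξ μ)‖ ≤ t * ε := by
        rw [norm_smul, Real.norm_of_nonneg ht]
        exact mul_le_mul_of_nonneg_left hv ht
      have e3 : C₂ * t ^ 2 ≤ C₂ * ε * t := by
        have := mul_le_mul_of_nonneg_left (mul_le_mul_of_nonneg_right htε ht) hC₂0
        linarith
      have := norm_sub_le (x t ξ d' - (ξ + t • f ξ μ)) (t • (v - f ξ μ))
      rw [← e1] at this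
      linarith
    have h4 := le_outputSup (output_le_apply_zero hβ hq0 hb ξ) hd'm (add_nonneg ht hs)
    have h5 := mul_le_mul_of_nonneg_left
      (timeWeight_le_mul hs hsT ht ht1 hκξ.le hκT) (norm_nonneg (h (x (t + s) ξ d')))
    have h6 := mul_le_mul_of_nonneg_left h4 (sub_nonneg.2 hκt)
    have h7 := mul_le_mul_of_nonneg_right h1 (zero_le_one.trans (one_le_timeWeight hs))
    have h8 : C₁ * ‖x t ξ d' - η‖ * timeWeight s ≤ κ (q ξ) * (a / 2) * t := by
      calc C₁ * ‖x t ξ d' - η‖ * timeWeight s ≤ C₁ * ((C₂ + 1) * ε * t) * 2 := by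
            have := one_le_timeWeight hs
            gcongr
            exact timeWeight_le_two hs
        _ = 2 * C₁ * ((C₂ + 1) * ε) * t := by ring
        _ ≤ κ (q ξ) * (a / 2) * t := by
            refine mul_le_mul_of_nonneg_right (hεC.trans ?_) ht
            exact mul_le_mul_of_nonneg_right hκle (by linarith)
    have h9 := mul_le_mul_of_nonneg_left haV (mul_nonneg hκξ.le ht)
    have h10 : ‖h (x (t + s) ξ d')‖ * timeWeight s ≤ (1 - κ (q ξ) * t) * outputSup Ω h x ξ := by
      linarith
    linarith

end OutputSup

/-- A positive smooth function bounded by `1` is the reciprocal of the derivative of a smooth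
class-`K∞` function. -/
theorem exists_contDiff_classKInfty_deriv_eq {θ : ℝ → ℝ} (hθ : ContDiff ℝ (⊤ : ℕ∞) θ)
    (hθ0 : ∀ v, 0 < θ v ∧ θ v ≤ 1) :
    ∃ Ψ : ℝ → ℝ, ContDiff ℝ (⊤ : ℕ∞) Ψ ∧ IsClassKInfty Ψ ∧ ∀ v, deriv Ψ v = (θ v)⁻¹ := by
  have hinv : ContDiff ℝ (⊤ : ℕ∞) fun v => (θ v)⁻¹ := hθ.inv fun v => (hθ0 v).1.ne'
  have hder : ∀ v, HasDerivAt (fun v => ∫ s in (0 : ℝ)..v, (θ s)⁻¹) (θ v)⁻¹ v := fun v =>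
    intervalIntegral.integral_hasDerivAt_right (hinv.continuous.intervalIntegrable _ _)
      (hinv.continuous.stronglyMeasurableAtFilter _ _) hinv.continuous.continuousAt
  have hderiv : deriv (fun v => ∫ s in (0 : ℝ)..v, (θ s)⁻¹) = fun v => (θ v)⁻¹ :=
    funext fun v => (hder v).deriv
  have hone : ∀ v, 1 ≤ (θ v)⁻¹ := fun v => (one_le_inv₀ (hθ0 v).1).2 (hθ0 v).2
  have hlow : ∀ v, 0 ≤ v → v ≤ ∫ s in (0 : ℝ)..v, (θ s)⁻¹ := fun v hv => by
    have := intervalIntegral.integral_mono_on (μ := volume) hv (intervalIntegrable_const (c := (1 : ℝ)))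
      (hinv.continuous.intervalIntegrable 0 v) fun s _ => hone s
    simpa using this
  refine ⟨_, contDiff_infty_iff_deriv.2 ⟨fun v => (hder v).differentiableAt, ?_⟩,
    ⟨⟨fun v _ => (hder v).continuousAt.continuousWithinAt, ?_, by simp⟩, ?_⟩,
    fun v => (hder v).deriv⟩
  · rw [hderiv]
    exact hinv
  · refine (strictMono_of_deriv_pos fun v => ?_).strictMonoOn _
    rw [hderiv]
    exact inv_pos.2 (hθ0 v).1
  · refine tendsto_atTop_mono' _ ?_ tendsto_id
    filter_upwards [eventually_ge_atTop 0] with v hv using hlow v hv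

/-- Rescaling a Lyapunov function `W` that dominates `q` turns a decay rate depending on `q` into
a decay rate depending only on the level of the rescaled function. -/
theorem exists_rescaling_uniform_decay {ι : Type*} {W q D : ι → ℝ} {Φ : ℝ → ℝ}
    (hΦ : IsClassKInfty Φ) (hqW : ∀ i, Φ (q i) ≤ W i)
    (hdec : ∀ a, 0 < a → ∃ e : ℝ → ℝ, Antitone e ∧ (∀ b, 0 < e b) ∧
      ∀ i, a ≤ W i → D i ≤ -e (q i)) (hW0 : ∀ i, 0 ≤ W i) :
    ∃ Ψ : ℝ → ℝ, ContDiff ℝ (⊤ : ℕ∞) Ψ ∧ IsClassKInfty Ψ ∧ (∀ v, 0 ≤ deriv Ψ v) ∧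
      ∀ a, 0 < a → ∃ c, 0 < c ∧ ∀ i, a ≤ Ψ (W i) → deriv Ψ (W i) * D i ≤ -c := by
  have hband : ∀ a b, 0 < a → ∃ c, 0 < c ∧ ∀ i, a ≤ W i → W i ≤ b → D i ≤ -c := by
    intro a b ha
    obtain ⟨e, he, he0, hD⟩ := hdec a ha
    obtain ⟨r, hr, hr0⟩ := ((hΦ.2.eventually_gt_atTop b).and (eventually_ge_atTop 0)).exists
    refine ⟨e r, he0 r, fun i hai hib => (hD i hai).trans (neg_le_neg (he ?_))⟩
    by_contra hlt
    have := hΦ.1.mono hr0 (not_le.1 hlt).le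
    linarith [hqW i]
  obtain ⟨k, hk, hkP⟩ := exists_antitone_choice
    (fun b c => ∀ i, 1 ≤ W i → W i ≤ b → D i ≤ -c)
    (fun b b' c c' hP hb _ hc i h1 h2 => (hP i h1 (h2.trans hb)).trans (neg_le_neg hc))
    (fun b => hband 1 b one_pos)
  obtain ⟨θ, hθ, hθk⟩ := exists_contDiff_pos_le_antitone hk fun b => (hkP b).1
  have hθ1 : ∀ v, θ v ≤ 1 := fun v => (hθk v).2.1.trans (hkP v).2.1
  obtain ⟨Ψ, hΨ, hΨK, hΨd⟩ :=
    exists_contDiff_classKInfty_deriv_eq hθ fun v => ⟨(hθk v).1, hθ1 v⟩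
  refine ⟨Ψ, hΨ, hΨK, fun v => by rw [hΨd]; exact (inv_pos.2 (hθk v).1).le, fun a ha => ?_⟩
  obtain ⟨a', hΨa', ha'⟩ : ∃ a', Ψ a' < a ∧ 0 < a' := by
    have h0 : ∀ᶠ v in 𝓝 0, Ψ v < a :=
      hΨ.continuous.continuousAt.eventually (gt_mem_nhds (by rwa [hΨK.1.2.2]))
    exact ((h0.filter_mono nhdsWithin_le_nhds).and
      (eventually_mem_nhdsWithin (a := (0 : ℝ)) (s := Ioi 0))).exists
  obtain ⟨c, hc0, hc⟩ := hband a' 1 ha'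
  refine ⟨min 1 c, lt_min one_pos hc0, fun i hi => ?_⟩
  have hWa : a' ≤ W i := by
    by_contra hlt
    have := hΨK.1.mono (hW0 i) (not_le.1 hlt).le
    linarith
  rw [hΨd]
  have hθi := (hθk (W i)).1
  rcases le_total 1 (W i) with h1 | h1
  · have h2 : D i ≤ -θ (W i) :=
      ((hkP (W i)).2.2 i h1 le_rfl).trans (neg_le_neg (hθk (W i)).2.1)
    have h3 := mul_le_mul_of_nonneg_left h2 (inv_pos.2 hθi).le
    rw [mul_neg, inv_mul_cancel₀ hθi.ne'] at h3
    linarith [min_le_left 1 c]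
  · have h2 := hc i hWa h1
    have h3 : 1 ≤ (θ (W i))⁻¹ := (one_le_inv₀ hθi).2 (hθ1 _)
    have h4 := mul_le_mul_of_nonneg_left h2 (inv_pos.2 hθi).le
    have h5 := mul_le_mul_of_nonneg_right h3 hc0.le
    linarith [min_le_right 1 c]

/-- Existence of a smooth Lyapunov function for the output, with a decay rate depending on the
quantity `q` that controls the outputs. -/
theorem IsUBIBS.exists_smooth_lyapunov {n m p : ℕ} {Ω : Set (EuclideanSpace ℝ (Fin m))}
    {f : EuclideanSpace ℝ (Fin n) → EuclideanSpace ℝ (Fin m) → EuclideanSpace ℝ (Fin n)}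
    {h : EuclideanSpace ℝ (Fin n) → EuclideanSpace ℝ (Fin p)}
    {x : ℝ → EuclideanSpace ℝ (Fin n) → (ℝ → EuclideanSpace ℝ (Fin m)) →
      EuclideanSpace ℝ (Fin n)}
    {β : ℝ → ℝ → ℝ} {q : EuclideanSpace ℝ (Fin n) → ℝ} (hx : IsUBIBS Ω f x) (hΩ : IsCompact Ω)
    (hf : LocallyLipschitz fun q : EuclideanSpace ℝ (Fin n) × EuclideanSpace ℝ (Fin m) =>
      f q.1 q.2) (hh : LocallyLipschitz h) (hβ : IsClassKL β) (hq : Continuous q)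
    (hq0 : ∀ ξ, 0 ≤ q ξ)
    (hb : ∀ ξ d, MemMOmega Ω d → ∀ t ∈ Ici (0 : ℝ), ‖h (x t ξ d)‖ ≤ β (q ξ) t) :
    ∃ (W : EuclideanSpace ℝ (Fin n) → ℝ) (Φ : ℝ → ℝ), ContDiff ℝ (⊤ : ℕ∞) W ∧ IsClassKInfty Φ ∧
      (∀ ξ, 0 ≤ W ξ) ∧ (∀ ξ, Φ ‖h ξ‖ ≤ W ξ) ∧
      (∀ ξ c, ‖h ξ‖ ≤ c → (∀ d, MemMOmega Ω d → ∀ t ∈ Ici (0 : ℝ), ‖h (x t ξ d)‖ ≤ c) →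
        W ξ ≤ 4 * c) ∧
      (∀ ξ, ∀ μ ∈ Ω, fderiv ℝ W ξ (f ξ μ) ≤ 0) ∧
      ∀ a, 0 < a → ∃ e : ℝ → ℝ, Antitone e ∧ (∀ b, 0 < e b) ∧
        ∀ ξ, a ≤ W ξ → ∀ μ ∈ Ω, fderiv ℝ W ξ (f ξ μ) ≤ -e (q ξ) := by
  obtain ⟨V, hVc, hhV, hVle, hVd⟩ : ∃ V : EuclideanSpace ℝ (Fin n) → ℝ, Continuous V ∧
      (∀ ξ, ‖h ξ‖ ≤ V ξ) ∧
      (∀ ξ c, ‖h ξ‖ ≤ c → (∀ d, MemMOmega Ω d → ∀ t ∈ Ici (0 : ℝ), ‖h (x t ξ d)‖ ≤ c) →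
        V ξ ≤ 2 * c) ∧ RobustDecay Ω f V q := by
    rcases Ω.eq_empty_or_nonempty with rfl | hne
    · refine ⟨fun ξ => ‖h ξ‖, hh.continuous.norm, fun ξ => le_rfl, fun ξ c hc _ => ?_,
        fun a _ => ⟨fun _ => 1, antitone_const, fun _ => one_pos, fun R => ⟨1, one_pos, ?_⟩⟩⟩
      · linarith [norm_nonneg (h ξ)]
      · rintro ξ - - μ ⟨⟩
    · exact ⟨outputSup Ω h x, continuous_outputSup hx hΩ hne hf hh hβ hq hq0 hb,
        fun ξ => norm_le_outputSup hx.1 hne (output_le_apply_zero hβ hq0 hb ξ),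
        fun ξ c _ hc => outputSup_le_two_mul hne hc,
        robustDecay_outputSup hx hΩ hne hf hh hβ hq hq0 hb⟩
  obtain ⟨W, Φ, hW, hΦ, hWV, hW0, hWd⟩ := hVd.exists_smooth hΩ hf.continuous hVc
    (fun ξ => (norm_nonneg _).trans (hhV ξ)) hq
  refine ⟨W, Φ, hW, hΦ, fun ξ => (hWV ξ).1,
    fun ξ => (hΦ.1.mono (norm_nonneg _) (hhV ξ)).trans (hWV ξ).2.1, fun ξ c h1 h2 => ?_, hW0, hWd⟩
  linarith [(hWV ξ).2.2, hVle ξ c h1 h2]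

/-- Converse Lyapunov theorem for uniformly output stable disturbance systems. -/
theorem exists_lyapunov_of_ubibs_uos {n m p : ℕ} (Ω : Set (EuclideanSpace ℝ (Fin m)))
    (hΩ : IsCompact Ω)
    (f : EuclideanSpace ℝ (Fin n) → EuclideanSpace ℝ (Fin m) → EuclideanSpace ℝ (Fin n))
    (h : EuclideanSpace ℝ (Fin n) → EuclideanSpace ℝ (Fin p))
    (x : ℝ → EuclideanSpace ℝ (Fin n) → (ℝ → EuclideanSpace ℝ (Fin m)) →
      EuclideanSpace ℝ (Fin n))
    (hf : LocallyLipschitz fun q : EuclideanSpace ℝ (Fin n) × EuclideanSpace ℝ (Fin m) =>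
      f q.1 q.2)
    (hf0 : f 0 0 = 0)
    (hh : LocallyLipschitz h) (hh0 : h 0 = 0)
    (hUBIBS : IsUBIBS Ω f x) (hUOS : IsUOS Ω h x) :
    (∃ (V : EuclideanSpace ℝ (Fin n) → ℝ) (α₁ α₂ : ℝ → ℝ) (α₃ : ℝ → ℝ → ℝ),
      ContDiff ℝ (⊤:ℕ∞) V ∧ (∀ ξ, 0 ≤ V ξ) ∧
      IsClassKInfty α₁ ∧ IsClassKInfty α₂ ∧
      (∀ r ∈ Ici (0:ℝ), IsClassK fun s => α₃ s r) ∧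
      (∀ s ∈ Ici (0:ℝ), AntitoneOn (fun r => α₃ s r) (Ici 0)) ∧
      (∀ ξ, α₁ ‖h ξ‖ ≤ V ξ ∧ V ξ ≤ α₂ ‖ξ‖) ∧
      (∀ ξ, ∀ μ ∈ Ω, fderiv ℝ V ξ (f ξ μ) ≤ -α₃ (V ξ) ‖ξ‖)) ∧
    ((∃ σ₀ : ℝ → ℝ, IsClassK σ₀ ∧
        ∀ ξ d, MemMOmega Ω d → ∀ t ∈ Ici (0:ℝ), ‖h (x t ξ d)‖ ≤ σ₀ ‖h ξ‖) →
      ∃ (V : EuclideanSpace ℝ (Fin n) → ℝ) (α₁ α₂ : ℝ → ℝ) (α₃ : ℝ → ℝ → ℝ),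
        ContDiff ℝ (⊤:ℕ∞) V ∧ (∀ ξ, 0 ≤ V ξ) ∧
        IsClassKInfty α₁ ∧ IsClassKInfty α₂ ∧
        (∀ r ∈ Ici (0:ℝ), IsClassK fun s => α₃ s r) ∧
        (∀ s ∈ Ici (0:ℝ), AntitoneOn (fun r => α₃ s r) (Ici 0)) ∧
        (∀ ξ, α₁ ‖h ξ‖ ≤ V ξ ∧ V ξ ≤ α₂ ‖h ξ‖) ∧
        (∀ ξ, ∀ μ ∈ Ω, fderiv ℝ V ξ (f ξ μ) ≤ -α₃ (V ξ) ‖ξ‖)) ∧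
    ((∃ β : ℝ → ℝ → ℝ, IsClassKL β ∧
        ∀ ξ d, MemMOmega Ω d → ∀ t ∈ Ici (0:ℝ), ‖h (x t ξ d)‖ ≤ β ‖h ξ‖ t) →
      ∃ (V : EuclideanSpace ℝ (Fin n) → ℝ) (α₁ α₂ α₃ : ℝ → ℝ),
        ContDiff ℝ (⊤:ℕ∞) V ∧ (∀ ξ, 0 ≤ V ξ) ∧
        IsClassKInfty α₁ ∧ IsClassKInfty α₂ ∧ IsClassK α₃ ∧
        (∀ ξ, α₁ ‖h ξ‖ ≤ V ξ ∧ V ξ ≤ α₂ ‖h ξ‖) ∧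
        (∀ ξ, ∀ μ ∈ Ω, fderiv ℝ V ξ (f ξ μ) ≤ -α₃ (V ξ))) := by
  have hdecay : ∀ (W r : EuclideanSpace ℝ (Fin n) → ℝ),
      (∀ ξ, ∀ μ ∈ Ω, fderiv ℝ W ξ (f ξ μ) ≤ 0) →
      (∀ a, 0 < a → ∃ e : ℝ → ℝ, Antitone e ∧ (∀ b, 0 < e b) ∧
        ∀ ξ, a ≤ W ξ → ∀ μ ∈ Ω, fderiv ℝ W ξ (f ξ μ) ≤ -e (r ξ)) →
      ∃ α : ℝ → ℝ → ℝ, (∀ b, IsClassK fun s => α s b) ∧ (∀ s, Antitone (α s)) ∧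
        ∀ ξ, ∀ μ ∈ Ω, fderiv ℝ W ξ (f ξ μ) ≤ -α (W ξ) (r ξ) := by
    intro W r hW0 hW
    obtain ⟨α, hα, hα', hαW⟩ := exists_classK_decay
      (ι := {i : EuclideanSpace ℝ (Fin n) × EuclideanSpace ℝ (Fin m) // i.2 ∈ Ω})
      (fun i => W i.1.1) (fun i => r i.1.1) (fun i => fderiv ℝ W i.1.1 (f i.1.1 i.1.2))
      (fun i => hW0 _ _ i.2) fun a ha => by
        obtain ⟨e, he, he0, heW⟩ := hW a ha
        exact ⟨e, he, he0, fun i hi => heW _ hi _ i.2⟩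
    exact ⟨α, hα, hα', fun ξ μ hμ => hαW ⟨(ξ, μ), hμ⟩⟩
  obtain ⟨β, hβ, hb⟩ := hUOS
  obtain ⟨W, Φ, hW, hΦ, hW0, hΦW, hWle, hWd0, hWd⟩ := hUBIBS.exists_smooth_lyapunov hΩ hf hh hβ
    continuous_norm norm_nonneg hb
  obtain ⟨α₃, hα₃, hα₃', hα₃W⟩ := hdecay W norm hWd0 hWd
  refine ⟨?_, ?_, ?_⟩
  · obtain ⟨γ, hγ, hγh⟩ := hh.exists_classKInfty_bound hh0
    have hβ0 := hβ.1 0 self_mem_Ici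
    refine ⟨W, Φ, _, α₃, hW, hW0, hΦ, (hγ.1.add hβ0).const_mul_add_id four_pos,
      fun r _ => hα₃ r, fun s _ => (hα₃' s).antitoneOn _, fun ξ => ⟨hΦW ξ, ?_⟩, hα₃W⟩
    have h1 := hγh ξ
    have h2 := hβ0.nonneg (norm_nonneg ξ)
    have h3 := (norm_nonneg (h ξ)).trans h1
    refine hWle ξ _ (by linarith [norm_nonneg ξ]) fun d hd t ht => ?_
    have h4 := output_le_apply_zero hβ norm_nonneg hb ξ d hd t ht
    linarith [norm_nonneg ξ]
  · rintro ⟨σ₀, hσ₀, hσb⟩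
    refine ⟨W, Φ, _, α₃, hW, hW0, hΦ, hσ₀.const_mul_add_id four_pos,
      fun r _ => hα₃ r, fun s _ => (hα₃' s).antitoneOn _, fun ξ => ⟨hΦW ξ, ?_⟩, hα₃W⟩
    have h1 := hσ₀.nonneg (norm_nonneg (h ξ))
    refine hWle ξ _ (by linarith) fun d hd t ht => ?_
    linarith [hσb ξ d hd t ht, norm_nonneg (h ξ)]
  · rintro ⟨β', hβ', hb'⟩
    have hq0 : ∀ ξ, 0 ≤ ‖h ξ‖ := fun ξ => norm_nonneg _
    obtain ⟨Y, Θ, hY, hΘ, hY0, hΘY, hYle, hYd0, hYd⟩ := hUBIBS.exists_smooth_lyapunov hΩ hf hh hβ'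
      hh.continuous.norm hq0 hb'
    obtain ⟨Ψ, hΨ, hΨK, hΨd, hΨY⟩ := exists_rescaling_uniform_decay
      (ι := {i : EuclideanSpace ℝ (Fin n) × EuclideanSpace ℝ (Fin m) // i.2 ∈ Ω})
      (W := fun i => Y i.1.1) (q := fun i => ‖h i.1.1‖)
      (D := fun i => fderiv ℝ Y i.1.1 (f i.1.1 i.1.2)) hΘ (fun i => hΘY _)
      (fun a ha => by
        obtain ⟨e, he, he0, heY⟩ := hYd a ha
        exact ⟨e, he, he0, fun i hi => heY _ hi _ i.2⟩) (fun i => hY0 _)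
    have hfd : ∀ ξ w, fderiv ℝ (fun ξ => Ψ (Y ξ)) ξ w = deriv Ψ (Y ξ) * fderiv ℝ Y ξ w := by
      intro ξ w
      have h1 := (hΨ.differentiable (by simp) (Y ξ)).hasDerivAt.comp_hasFDerivAt ξ
        (hY.differentiable (by simp) ξ).hasFDerivAt
      have h2 := congrArg (fun A => A w) h1.fderiv
      simpa [Function.comp_def] using h2
    obtain ⟨γ, hγ, -, hγY⟩ := hdecay (fun ξ => Ψ (Y ξ)) (fun _ => 0)
      (fun ξ μ hμ => by
        rw [hfd]
        exact mul_nonpos_of_nonneg_of_nonpos (hΨd _) (hYd0 ξ μ hμ))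
      (fun a ha => by
        obtain ⟨c, hc0, hc⟩ := hΨY a ha
        refine ⟨fun _ => c, antitone_const, fun _ => hc0, fun ξ hξ μ hμ => ?_⟩
        rw [hfd]
        exact hc ⟨(ξ, μ), hμ⟩ hξ)
    have hβ0 := hβ'.1 0 self_mem_Ici
    refine ⟨fun ξ => Ψ (Y ξ), _, _, fun s => γ s 0, hΨ.comp hY, fun ξ => hΨK.1.nonneg (hY0 ξ),
      hΨK.comp hΘ, hΨK.comp (hβ0.const_mul_add_id four_pos), hγ 0,
      fun ξ => ⟨hΨK.1.mono (hΘ.1.nonneg (hq0 ξ)) (hΘY ξ), hΨK.1.mono (hY0 ξ) ?_⟩, hγY⟩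
    have h1 := hβ0.nonneg (hq0 ξ)
    refine hYle ξ _ (by linarith) fun d hd t ht => ?_
    linarith [output_le_apply_zero hβ' hq0 hb' ξ d hd t ht, hq0 ξ]
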